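/- Uniform Sobolev bound on a short time interval, vertical resistivity: Let s > 2, ν > 0, and M > 0. There exist T > 0 and C ≥ 1, depending only on s, ν and M, with the following property. If a, b : [0,T') × ℝ² → ℝ (for any T' > 0) are smooth functions such that a(t,·) and b(t,·) are Schwartz functions for each t (with all Schwartz seminorms locally bounded in t), (a,b) solves pointwise the system ∂ₜa + (∂_y a)(∂_x b) − (∂_x a)(∂_y b) = 0, ∂ₜb − (∂_y a)∂_xΔa + (∂_x a)∂_yΔa = νΔb, and ‖a(0)‖_{H^{s+1}}² + ‖b(0)‖_{H^{s}}² ≤ M, then for all t ∈ [0, min(T, T')), ‖a(t)‖_{H^{s+1}}² + ‖b(t)‖_{H^{s}}² ≤ C ( ‖a(0)‖_{H^{s+1}}² + ‖b(0)‖_{H^{s}}² ). -/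

import Mathlib

open MeasureTheory Real
open scoped FourierTransform

noncomputable section

/-- The plane `ℝ²`. -/
abbrev Plane := EuclideanSpace ℝ (Fin 2)

/-- Partial derivative in the coordinate direction `i` (`i = 0` is `x`, `i = 1` is `y`). -/
def pd (i : Fin 2) (f : Plane → ℝ) (x : Plane) : ℝ :=
  fderiv ℝ f x (EuclideanSpace.single i 1)

/-- The Laplacian `Δ = ∂ₓₓ + ∂_yy` on the plane. -/
def lap (f : Plane → ℝ) (x : Plane) : ℝ :=
  pd 0 (pd 0 f) x + pd 1 (pd 1 f) x

/-- The Sobolev `H^s` norm, `‖f‖_{H^s} = ‖ξ ↦ (1+|ξ|²)^{s/2} (𝓕f)(ξ)‖_{L²}`, written via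
the Fourier integral (which is well defined e.g. for Schwartz functions). -/
def sobNorm (s : ℝ) (f : Plane → ℝ) : ℝ :=
  (∫ ξ : Plane, (1 + ‖ξ‖ ^ 2) ^ s * ‖𝓕 (fun x => (f x : ℂ)) ξ‖ ^ 2) ^ (1/2 : ℝ)

lemma rpow_diff_le {x y e : ℝ} (hx : 0 < x) (hxy : x ≤ y) (he : 1 ≤ e) :
    y ^ e - x ^ e ≤ e * y ^ (e - 1) * (y - x) := by
  have hy : 0 < y := hx.trans_le hxy
  have h := one_add_mul_self_le_rpow_one_add (s := x / y - 1) (by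
    have : 0 ≤ x / y := by positivity
    linarith) he
  rw [add_sub_cancel, Real.div_rpow hx.le hy.le] at h
  have hye : 0 < y ^ e := Real.rpow_pos_of_pos hy e
  rw [le_div_iff₀ hye] at h
  have h2 : y ^ e = y ^ (e - 1) * y := by
    rw [← Real.rpow_add_one hy.ne']; ring_nf
  have h3 : (1 + e * (x / y - 1)) * y ^ e = y ^ e - e * y ^ (e - 1) * (y - x) := by
    rw [h2]; field_simp; ring
  linarith

lemma symbol_aux1 {s P Q R X : ℝ} (hs : 2 < s) (hP : 1 ≤ P) (hQ : 1 ≤ Q) (hR : 1 ≤ R)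
    (hPQ : P ≤ Q) (hQ2 : Q ≤ 2 * P) (h1 : Q ≤ P + R) (h3 : R ≤ P + Q)
    (hX0 : 0 ≤ X) (hX2 : X ≤ Q * R) :
    X * |(Q ^ 2 - P ^ 2) * R ^ (2 * s) + P ^ (2 * s + 2) - Q ^ (2 * s + 2)| ≤
      ((2 * 2 ^ (2 * s) + (2 * s + 2)) * 2 ^ (s + 1)) *
        (P ^ (s + 1) * Q ^ (s + 1) * R ^ (s + 1) * R ^ (1 - s)) := by
  have hP0 : 0 < P := by linarith
  have hQ0 : 0 < Q := by linarith
  have hR0 : 0 < R := by linarith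
  have hd := rpow_diff_le (e := 2 * s + 2) hP0 hPQ (by linarith)
  have hmono : P ^ (2 * s + 2) ≤ Q ^ (2 * s + 2) := Real.rpow_le_rpow hP0.le hPQ (by linarith)
  have e1 : Q ^ (2 * s + 2 - 1) = Q ^ (2 * s) * Q := by
    rw [← Real.rpow_add_one hQ0.ne']; ring_nf
  rw [e1] at hd
  have hR2s : R ^ (2 * s) ≤ 2 ^ (2 * s) * Q ^ (2 * s) := by
    rw [← Real.mul_rpow (by norm_num) hQ0.le]
    exact Real.rpow_le_rpow hR0.le (by linarith) (by linarith)
  have hq2s : 0 < Q ^ (2 * s) := Real.rpow_pos_of_pos hQ0 _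
  have h2s : (0:ℝ) < 2 ^ (2 * s) := Real.rpow_pos_of_pos (by norm_num) _
  have hr2s : 0 < R ^ (2 * s) := Real.rpow_pos_of_pos hR0 _
  have hm : |(Q ^ 2 - P ^ 2) * R ^ (2 * s) + P ^ (2 * s + 2) - Q ^ (2 * s + 2)| ≤
      (2 * 2 ^ (2 * s) + (2 * s + 2)) * (R * (Q ^ (2 * s) * Q)) := by
    have a1 : 0 ≤ (Q ^ 2 - P ^ 2) * R ^ (2 * s) := by
      apply mul_nonneg _ hr2s.le; nlinarith
    have a2 : (Q ^ 2 - P ^ 2) * R ^ (2 * s) ≤ (R * (2 * Q)) * (2 ^ (2 * s) * Q ^ (2 * s)) := by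
      apply mul_le_mul _ hR2s hr2s.le (by positivity); nlinarith
    have a3 : (2 * s + 2) * (Q ^ (2 * s) * Q) * (Q - P) ≤ (2 * s + 2) * (Q ^ (2 * s) * Q) * R := by
      apply mul_le_mul_of_nonneg_left (by linarith)
      have : 0 < 2 * s + 2 := by linarith
      positivity
    rw [abs_le]
    constructor <;> nlinarith
  have e2 : Q ^ (2 * s) * Q * Q = Q ^ (s + 1) * Q ^ (s + 1) := by
    rw [← Real.rpow_add_one hQ0.ne', ← Real.rpow_add_one hQ0.ne', ← Real.rpow_add hQ0]; ring_nf
  have e3 : R ^ (s + 1) * R ^ (1 - s) = R ^ 2 := by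
    rw [← Real.rpow_add hR0, show s + 1 + (1 - s) = (2:ℝ) by ring, Real.rpow_two]
  have e4 : Q ^ (s + 1) ≤ 2 ^ (s + 1) * P ^ (s + 1) := by
    rw [← Real.mul_rpow (by norm_num) hP0.le]
    exact Real.rpow_le_rpow hQ0.le hQ2 (by linarith)
  have hqs : 0 < Q ^ (s + 1) := Real.rpow_pos_of_pos hQ0 _
  have hK : 0 < (2 * 2 ^ (2 * s) + (2 * s + 2)) := by linarith
  calc _ ≤ (Q * R) * ((2 * 2 ^ (2 * s) + (2 * s + 2)) * (R * (Q ^ (2 * s) * Q))) := by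
        apply mul_le_mul hX2 hm (abs_nonneg _) (by positivity)
    _ = (2 * 2 ^ (2 * s) + (2 * s + 2)) * (R ^ 2 * (Q ^ (s + 1) * Q ^ (s + 1))) := by
        rw [← e2]; ring
    _ ≤ (2 * 2 ^ (2 * s) + (2 * s + 2)) * (R ^ 2 * ((2 ^ (s + 1) * P ^ (s + 1)) * Q ^ (s + 1))) := by
        gcongr
    _ = _ := by rw [← e3]; ring

lemma symbol_aux2 {s P Q R X : ℝ} (hs : 2 < s) (hP : 1 ≤ P) (hQ : 1 ≤ Q) (hR : 1 ≤ R)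
    (hQ2 : 2 * P ≤ Q) (h1 : Q ≤ P + R) (h3 : R ≤ P + Q)
    (hX0 : 0 ≤ X) (hX1 : X ≤ P * Q) :
    X * |(Q ^ 2 - P ^ 2) * R ^ (2 * s) + P ^ (2 * s + 2) - Q ^ (2 * s + 2)| ≤
      ((2 * s * 2 ^ (2 * s - 1) + 2 ^ (2 * s)) * 2 ^ (s + 1)) *
        (P ^ (s + 1) * Q ^ (s + 1) * R ^ (s + 1) * P ^ (1 - s)) := by
  have hP0 : 0 < P := by linarith
  have hQ0 : 0 < Q := by linarith
  have hR0 : 0 < R := by linarith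
  have hR2 : R ≤ 2 * Q := by linarith
  have hQR : Q ≤ 2 * R := by linarith
  have hbd : ∀ x, 0 < x → x ≤ 2 * Q → x ^ (2 * s) ≤ 2 ^ (2 * s) * Q ^ (2 * s) := by
    intro x hx hx2
    rw [← Real.mul_rpow (by norm_num) hQ0.le]
    exact Real.rpow_le_rpow hx.le hx2 (by linarith)
  have hbd' : ∀ x, 0 < x → x ≤ 2 * Q → x ^ (2 * s - 1) ≤ 2 ^ (2 * s - 1) * Q ^ (2 * s - 1) := by
    intro x hx hx2
    rw [← Real.mul_rpow (by norm_num) hQ0.le]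
    exact Real.rpow_le_rpow hx.le hx2 (by linarith)
  have hdiff : |R ^ (2 * s) - Q ^ (2 * s)| ≤ 2 * s * (2 ^ (2 * s - 1) * Q ^ (2 * s - 1)) * P := by
    rcases le_total R Q with h | h
    · have := rpow_diff_le (e := 2 * s) hR0 h (by linarith)
      have hm : R ^ (2 * s) ≤ Q ^ (2 * s) := Real.rpow_le_rpow hR0.le h (by linarith)
      rw [abs_of_nonpos (by linarith), neg_sub]
      refine this.trans ?_
      have := hbd' Q hQ0 (by linarith)
      gcongr
      linarith
    · have := rpow_diff_le (e := 2 * s) hQ0 h (by linarith)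
      have hm : Q ^ (2 * s) ≤ R ^ (2 * s) := Real.rpow_le_rpow hQ0.le h (by linarith)
      rw [abs_of_nonneg (by linarith)]
      refine this.trans ?_
      have := hbd' R hR0 (by linarith)
      gcongr
      linarith
  have hdiff2 : |R ^ (2 * s) - P ^ (2 * s)| ≤ 2 ^ (2 * s) * Q ^ (2 * s) := by
    have b1 := hbd R hR0 hR2
    have b2 := hbd P hP0 (by linarith)
    have : 0 < P ^ (2 * s) := Real.rpow_pos_of_pos hP0 _
    have : 0 < R ^ (2 * s) := Real.rpow_pos_of_pos hR0 _
    rw [abs_le]; constructor <;> linarith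
  have eP : P ^ (2 * s + 2) = P ^ (2 * s) * P ^ 2 := by
    rw [Real.rpow_add hP0, Real.rpow_ofNat]
  have eQ : Q ^ (2 * s + 2) = Q ^ (2 * s) * Q ^ 2 := by
    rw [Real.rpow_add hQ0, Real.rpow_ofNat]
  have eQ1 : Q ^ (2 * s) = Q ^ (2 * s - 1) * Q := by
    rw [← Real.rpow_add_one hQ0.ne']; ring_nf
  have hq1 : 0 < Q ^ (2 * s - 1) := Real.rpow_pos_of_pos hQ0 _
  have h2s : (0:ℝ) < 2 ^ (2 * s) := Real.rpow_pos_of_pos (by norm_num) _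
  have h2s1 : (0:ℝ) < 2 ^ (2 * s - 1) := Real.rpow_pos_of_pos (by norm_num) _
  have hm : |(Q ^ 2 - P ^ 2) * R ^ (2 * s) + P ^ (2 * s + 2) - Q ^ (2 * s + 2)| ≤
      (2 * s * 2 ^ (2 * s - 1) + 2 ^ (2 * s)) * (P * (Q ^ (2 * s) * Q)) := by
    have : (Q ^ 2 - P ^ 2) * R ^ (2 * s) + P ^ (2 * s + 2) - Q ^ (2 * s + 2) =
      Q ^ 2 * (R ^ (2 * s) - Q ^ (2 * s)) - P ^ 2 * (R ^ (2 * s) - P ^ (2 * s)) := by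
      rw [eP, eQ]; ring
    rw [this]
    refine (abs_sub _ _).trans ?_
    rw [abs_mul, abs_mul, abs_of_nonneg (sq_nonneg Q), abs_of_nonneg (sq_nonneg P)]
    calc _ ≤ Q ^ 2 * (2 * s * (2 ^ (2 * s - 1) * Q ^ (2 * s - 1)) * P) +
          (P * Q) * (2 ^ (2 * s) * Q ^ (2 * s)) := by
            gcongr
            nlinarith
      _ = _ := by rw [eQ1]; ring
  have e2 : Q ^ (2 * s) * Q * Q = Q ^ (s + 1) * Q ^ (s + 1) := by
    rw [← Real.rpow_add_one hQ0.ne', ← Real.rpow_add_one hQ0.ne', ← Real.rpow_add hQ0]; ring_nf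
  have e3 : P ^ (s + 1) * P ^ (1 - s) = P ^ 2 := by
    rw [← Real.rpow_add hP0, show s + 1 + (1 - s) = (2:ℝ) by ring, Real.rpow_two]
  have e4 : Q ^ (s + 1) ≤ 2 ^ (s + 1) * R ^ (s + 1) := by
    rw [← Real.mul_rpow (by norm_num) hR0.le]
    exact Real.rpow_le_rpow hQ0.le hQR (by linarith)
  have hqs : 0 < Q ^ (s + 1) := Real.rpow_pos_of_pos hQ0 _
  have hK : 0 < (2 * s * 2 ^ (2 * s - 1) + 2 ^ (2 * s)) := by positivity
  calc _ ≤ (P * Q) * ((2 * s * 2 ^ (2 * s - 1) + 2 ^ (2 * s)) * (P * (Q ^ (2 * s) * Q))) := by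
        apply mul_le_mul hX1 hm (abs_nonneg _) (by positivity)
    _ = (2 * s * 2 ^ (2 * s - 1) + 2 ^ (2 * s)) * (P ^ 2 * (Q ^ (s + 1) * Q ^ (s + 1))) := by
        rw [← e2]; ring
    _ ≤ (2 * s * 2 ^ (2 * s - 1) + 2 ^ (2 * s)) *
          (P ^ 2 * (Q ^ (s + 1) * (2 ^ (s + 1) * R ^ (s + 1)))) := by
        gcongr
    _ = _ := by rw [← e3]; ring

lemma symbol_bound {s : ℝ} (hs : 2 < s) : ∃ K : ℝ, 0 < K ∧ ∀ P Q R X : ℝ, 1 ≤ P → 1 ≤ Q → 1 ≤ R →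
    P ≤ Q + R → Q ≤ P + R → R ≤ P + Q → 0 ≤ X → X ≤ P * Q → X ≤ Q * R → X ≤ P * R →
    X * |(Q ^ 2 - P ^ 2) * R ^ (2 * s) + P ^ (2 * s + 2) - Q ^ (2 * s + 2)| ≤
      K * (P ^ (s + 1) * Q ^ (s + 1) * R ^ (s + 1) *
        (P ^ (1 - s) + Q ^ (1 - s) + R ^ (1 - s))) := by
  set K1 : ℝ := ((2 * 2 ^ (2 * s) + (2 * s + 2)) * 2 ^ (s + 1)) with hK1
  set K2 : ℝ := ((2 * s * 2 ^ (2 * s - 1) + 2 ^ (2 * s)) * 2 ^ (s + 1)) with hK2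
  have k1 : 0 < K1 := by positivity
  have k2 : 0 < K2 := by positivity
  have key : ∀ P Q R X : ℝ, 1 ≤ P → 1 ≤ Q → 1 ≤ R → P ≤ Q → 
    P ≤ Q + R → Q ≤ P + R → R ≤ P + Q → 0 ≤ X → X ≤ P * Q → X ≤ Q * R → X ≤ P * R →
    X * |(Q ^ 2 - P ^ 2) * R ^ (2 * s) + P ^ (2 * s + 2) - Q ^ (2 * s + 2)| ≤
      (K1 + K2) * (P ^ (s + 1) * Q ^ (s + 1) * R ^ (s + 1) *
        (P ^ (1 - s) + Q ^ (1 - s) + R ^ (1 - s))) := by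
    intro P Q R X hP hQ hR hPQ t1 t2 t3 hX x1 x2 x3
    have hP0 : 0 < P := by linarith
    have hQ0 : 0 < Q := by linarith
    have hR0 : 0 < R := by linarith
    have p1 := Real.rpow_pos_of_pos hP0 (1 - s)
    have p2 := Real.rpow_pos_of_pos hQ0 (1 - s)
    have p3 := Real.rpow_pos_of_pos hR0 (1 - s)
    have q1 := Real.rpow_pos_of_pos hP0 (s + 1)
    have q2 := Real.rpow_pos_of_pos hQ0 (s + 1)
    have q3 := Real.rpow_pos_of_pos hR0 (s + 1)
    rcases le_total Q (2 * P) with h | h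
    · refine (symbol_aux1 hs hP hQ hR hPQ h t2 t3 hX x2).trans ?_
      rw [← hK1]
      gcongr
      · linarith
      · linarith
    · refine (symbol_aux2 hs hP hQ hR h t2 t3 hX x1).trans ?_
      rw [← hK2]
      gcongr
      · linarith
      · linarith
  refine ⟨K1 + K2, by positivity, ?_⟩
  intro P Q R X hP hQ hR t1 t2 t3 hX x1 x2 x3
  rcases le_total P Q with h | h
  · exact key P Q R X hP hQ hR h t1 t2 t3 hX x1 x2 x3
  · have := key Q P R X hQ hP hR h t2 t1 (by linarith) hX (by linarith) x3 x2
    have e : |(Q ^ 2 - P ^ 2) * R ^ (2 * s) + P ^ (2 * s + 2) - Q ^ (2 * s + 2)| =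
       |(P ^ 2 - Q ^ 2) * R ^ (2 * s) + Q ^ (2 * s + 2) - P ^ (2 * s + 2)| := by
      rw [← abs_neg]; congr 1; ring
    rw [e]
    refine this.trans (le_of_eq ?_)
    ring

/-- Japanese bracket. -/
def jb (p : Plane) : ℝ := √(1 + ‖p‖ ^ 2)

/-- cross product -/
def cr (p q : Plane) : ℝ := p 0 * q 1 - p 1 * q 0

lemma one_le_jb (p : Plane) : 1 ≤ jb p := by
  rw [jb, Real.one_le_sqrt]; nlinarith [sq_nonneg ‖p‖]

lemma jb_pos (p : Plane) : 0 < jb p := lt_of_lt_of_le one_pos (one_le_jb p)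

lemma jb_sq (p : Plane) : jb p ^ 2 = 1 + ‖p‖ ^ 2 := Real.sq_sqrt (by positivity)

lemma norm_le_jb (p : Plane) : ‖p‖ ≤ jb p := Real.le_sqrt_of_sq_le (by linarith)

lemma jb_neg (p : Plane) : jb (-p) = jb p := by simp [jb]

lemma jb_rpow (p : Plane) (s : ℝ) : jb p ^ (2 * s) = (1 + ‖p‖ ^ 2) ^ s := by
  rw [Real.rpow_mul (jb_pos p).le, Real.rpow_two, jb_sq]

@[fun_prop]
lemma continuous_jb : Continuous jb := by unfold jb; fun_prop

@[fun_prop]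
lemma continuous_jb_rpow (s : ℝ) : Continuous (fun p => jb p ^ s) :=
  continuous_jb.rpow_const (fun p => Or.inl (jb_pos p).ne')

lemma jb_add_le (p q : Plane) : jb (p + q) ≤ jb p + jb q := by
  have h1 := norm_add_le p q
  have h2 := norm_le_jb p
  have h3 := norm_le_jb q
  have h4 := one_le_jb p
  have h5 := one_le_jb q
  have h6 := jb_sq p
  have h7 := jb_sq q
  unfold jb
  rw [Real.sqrt_le_left (by positivity)]
  change 1 + ‖p + q‖ ^ 2 ≤ (jb p + jb q) ^ 2
  have : ‖p‖ * ‖q‖ ≤ jb p * jb q := mul_le_mul h2 h3 (norm_nonneg _) (by linarith)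
  have : ‖p + q‖ ^ 2 ≤ (‖p‖ + ‖q‖) ^ 2 := by gcongr
  nlinarith

lemma jb_add_le_mul (p q : Plane) : jb (p + q) ≤ 2 * (jb p * jb q) := by
  have := jb_add_le p q
  nlinarith [one_le_jb p, one_le_jb q]

lemma abs_cr_le (p q : Plane) : |cr p q| ≤ ‖p‖ * ‖q‖ := by
  apply abs_le_of_sq_le_sq _ (by positivity)
  rw [mul_pow, EuclideanSpace.norm_sq_eq, EuclideanSpace.norm_sq_eq]
  simp only [Fin.sum_univ_two, Real.norm_eq_abs, sq_abs, cr]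
  nlinarith [sq_nonneg (p 0 * q 0 + p 1 * q 1)]

lemma abs_cr_le_jb (p q : Plane) : |cr p q| ≤ jb p * jb q :=
  (abs_cr_le p q).trans (mul_le_mul (norm_le_jb p) (norm_le_jb q) (norm_nonneg _) (jb_pos p).le)

lemma continuous_cr : Continuous (fun z : Plane × Plane => cr z.1 z.2) := by
  unfold cr; fun_prop

lemma symbol_plane {s : ℝ} (hs : 2 < s) : ∃ K : ℝ, 0 < K ∧ ∀ p q : Plane,
    |cr p q * ((jb q ^ 2 - jb p ^ 2) * jb (-p-q) ^ (2 * s) +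
        jb p ^ (2 * s + 2) - jb q ^ (2 * s + 2))| ≤
      K * (jb p ^ (s + 1) * jb q ^ (s + 1) * jb (-p-q) ^ (s + 1) *
        (jb p ^ (1 - s) + jb q ^ (1 - s) + jb (-p-q) ^ (1 - s))) := by
  obtain ⟨K, hK, h⟩ := symbol_bound hs
  refine ⟨K, hK, fun p q => ?_⟩
  rw [abs_mul]
  have c1 : |cr p q| = |cr q (-p-q)| := by
    congr 1; simp only [cr, PiLp.sub_apply, PiLp.neg_apply]; ring
  have c2 : |cr p q| = |cr p (-p-q)| := by
    rw [← abs_neg]; congr 1; simp only [cr, PiLp.sub_apply, PiLp.neg_apply]; ring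
  apply h _ _ _ _ (one_le_jb _) (one_le_jb _) (one_le_jb _) _ _ _ (abs_nonneg _) (abs_cr_le_jb _ _)
  · rw [c1]; exact abs_cr_le_jb _ _
  · rw [c2]; exact abs_cr_le_jb _ _
  · have := jb_add_le q (-p-q)
    rw [show q + (-p-q) = -p by abel, jb_neg] at this; exact this
  · have := jb_add_le p (-p-q)
    rw [show p + (-p-q) = -q by abel, jb_neg] at this; exact this
  · have := jb_add_le p q
    rw [show -p - q = -(p+q) by abel, jb_neg]; exact this

/-- nice nonnegative functions -/
structure Nice (u : Plane → ℝ) : Prop where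
  cont : Continuous u
  nonneg : ∀ x, 0 ≤ u x
  int : Integrable u
  bdd : ∃ K, ∀ x, u x ≤ K

lemma Nice.memLp {u : Plane → ℝ} (h : Nice u) : MemLp u (ENNReal.ofReal 2) := by
  have : ENNReal.ofReal 2 = 2 := by norm_num
  rw [this, memLp_two_iff_integrable_sq h.cont.aestronglyMeasurable]
  obtain ⟨K, hK⟩ := h.bdd
  refine (h.int.const_mul K).mono' (by have := h.cont; fun_prop) (Filter.Eventually.of_forall fun x => ?_)
  rw [Real.norm_eq_abs, abs_of_nonneg (sq_nonneg _), sq]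
  exact mul_le_mul_of_nonneg_right (hK x) (h.nonneg x)

lemma Nice.comp_sub {u : Plane → ℝ} (h : Nice u) (p : Plane) : Nice (fun q => u (p - q)) where
  cont := by have := h.cont; fun_prop
  nonneg := fun x => h.nonneg _
  int := h.int.comp_sub_left p
  bdd := by obtain ⟨K, hK⟩ := h.bdd; exact ⟨K, fun x => hK _⟩

lemma cs_real {u v : Plane → ℝ} (hu : ∀ x, 0 ≤ u x) (hv : ∀ x, 0 ≤ v x)
    (mu : MemLp u (ENNReal.ofReal 2)) (mv : MemLp v (ENNReal.ofReal 2)) :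
    ∫ x, u x * v x ≤ √(∫ x, u x ^ 2) * √(∫ x, v x ^ 2) := by
  have := integral_mul_le_Lp_mul_Lq_of_nonneg (μ := (volume : Measure Plane)) (p := 2) (q := 2)
    (by exact Real.HolderConjugate.two_two) (f := u) (g := v)
    (Filter.Eventually.of_forall hu) (Filter.Eventually.of_forall hv) mu mv
  simpa [Real.sqrt_eq_rpow] using this

lemma Nice.tri_int {u v w : Plane → ℝ} (hu : Nice u) (hv : Nice v) (hw : Nice w) :
    Integrable (fun z : Plane × Plane => u z.1 * v z.2 * w (-z.1 - z.2)) (volume.prod volume) := by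
  obtain ⟨K, hK⟩ := hw.bdd
  refine (((hu.int.mul_prod hv.int)).const_mul K).mono' ?_ (Filter.Eventually.of_forall fun z => ?_)
  · have := hu.cont
    have := hv.cont
    have := hw.cont
    exact Continuous.aestronglyMeasurable (by fun_prop)
  · have := hu.nonneg z.1
    have := hv.nonneg z.2
    have := hw.nonneg (-z.1 - z.2)
    rw [Real.norm_eq_abs, abs_of_nonneg (by positivity), mul_comm]
    exact mul_le_mul_of_nonneg_right (hK _) (by positivity)

lemma Nice.tri1 {u v w : Plane → ℝ} (hu : Nice u) (hv : Nice v) (hw : Nice w) :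
    ∫ z : Plane × Plane, u z.1 * v z.2 * w (-z.1 - z.2) ∂(volume.prod volume) ≤
      (∫ x, u x) * (√(∫ x, v x ^ 2) * √(∫ x, w x ^ 2)) := by
  rw [integral_prod _ (hu.tri_int hv hw), ← integral_mul_const]
  apply integral_mono_of_nonneg
  · refine Filter.Eventually.of_forall fun p => integral_nonneg fun q => ?_
    have := hu.nonneg p
    have := hv.nonneg q
    have := hw.nonneg (-p - q)
    positivity
  · exact hu.int.mul_const _
  · refine Filter.Eventually.of_forall fun p => ?_
    simp only [mul_assoc]
    rw [integral_const_mul]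
    apply mul_le_mul_of_nonneg_left _ (hu.nonneg p)
    have h := cs_real hv.nonneg (hw.comp_sub (-p)).nonneg hv.memLp (hw.comp_sub (-p)).memLp
    rw [integral_sub_left_eq_self (fun x => w x ^ 2)] at h
    exact h

lemma Nice.tri2 {u v w : Plane → ℝ} (hu : Nice u) (hv : Nice v) (hw : Nice w) :
    ∫ z : Plane × Plane, u z.1 * v z.2 * w (-z.1 - z.2) ∂(volume.prod volume) ≤
      (∫ x, v x) * (√(∫ x, u x ^ 2) * √(∫ x, w x ^ 2)) := by
  rw [← integral_prod_swap]
  refine le_trans (le_of_eq ?_) (hv.tri1 hu hw)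
  congr 1; ext z
  simp only [Prod.fst_swap, Prod.snd_swap]
  rw [mul_comm (u z.2), neg_sub_comm]

lemma Nice.tri3 {u v w : Plane → ℝ} (hu : Nice u) (hv : Nice v) (hw : Nice w) :
    ∫ z : Plane × Plane, u z.1 * v z.2 * w (-z.1 - z.2) ∂(volume.prod volume) ≤
      (∫ x, w x) * (√(∫ x, u x ^ 2) * √(∫ x, v x ^ 2)) := by
  refine le_trans (le_of_eq ?_) (hu.tri2 hw hv)
  rw [integral_prod _ (hu.tri_int hv hw), integral_prod _ (hu.tri_int hw hv)]
  congr 1; ext p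
  simp only
  rw [← integral_sub_left_eq_self (fun q => u p * v q * w (-p - q)) volume (-p)]
  congr 1; ext q
  rw [sub_sub_cancel]; ring

/-- rapidly decaying continuous functions -/
structure Dec (f : Plane → ℂ) : Prop where
  cont : Continuous f
  dec : ∀ N : ℕ, ∃ K, ∀ ξ, ‖f ξ‖ * jb ξ ^ N ≤ K

lemma integrable_jb {e : ℝ} (he : e < -2) : Integrable (fun p : Plane => jb p ^ e) := by
  have := integrable_rpow_neg_one_add_norm_sq (E := Plane) (μ := volume) (r := -e)
    (by simp; linarith)
  refine this.congr (Filter.Eventually.of_forall fun p => ?_)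
  simp only
  rw [← jb_rpow]; ring_nf

lemma Dec.rdec {f : Plane → ℂ} (h : Dec f) (e : ℝ) : ∃ K, 0 ≤ K ∧ ∀ ξ, jb ξ ^ e * ‖f ξ‖ ≤ K := by
  obtain ⟨N, hN⟩ := exists_nat_ge e
  obtain ⟨K, hK⟩ := h.dec N
  have : ∀ ξ, jb ξ ^ e * ‖f ξ‖ ≤ K := fun ξ => by
    refine le_trans ?_ (hK ξ)
    rw [mul_comm]
    apply mul_le_mul_of_nonneg_left _ (norm_nonneg _)
    rw [← Real.rpow_natCast]
    exact Real.rpow_le_rpow_of_exponent_le (one_le_jb _) hN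
  exact ⟨K, le_trans (mul_nonneg (Real.rpow_nonneg (jb_pos 0).le _) (norm_nonneg _)) (this 0), this⟩

lemma int_of_bound {g : Plane → ℝ} (hg : Continuous g) {K : ℝ}
    (h : ∀ ξ, |g ξ| * jb ξ ^ (3:ℝ) ≤ K) : Integrable g := by
  refine ((integrable_jb (e := -3) (by norm_num)).const_mul K).mono' hg.aestronglyMeasurable
    (Filter.Eventually.of_forall fun ξ => ?_)
  have := jb_pos ξ
  rw [Real.rpow_neg this.le, ← div_eq_mul_inv, le_div_iff₀ (by positivity)]
  exact h ξ

lemma Dec.nice {f : Plane → ℂ} (h : Dec f) (e : ℝ) : Nice (fun ξ => jb ξ ^ e * ‖f ξ‖) where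
  cont := by have := h.cont; fun_prop
  nonneg := fun x => mul_nonneg (Real.rpow_nonneg (jb_pos x).le _) (norm_nonneg _)
  int := by
    obtain ⟨K, _, hK⟩ := h.rdec (e + 3)
    refine int_of_bound (by have := h.cont; fun_prop) (K := K) fun ξ => ?_
    have := jb_pos ξ
    rw [abs_of_nonneg (by positivity)]
    have := hK ξ
    rw [Real.rpow_add (jb_pos ξ)] at this
    linarith
  bdd := by obtain ⟨K, _, hK⟩ := h.rdec e; exact ⟨K, hK⟩

lemma Dec.integrable {f : Plane → ℂ} (h : Dec f) : Integrable f := by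
  have := (h.nice 0).int
  simp only [Real.rpow_zero, one_mul] at this
  exact (integrable_norm_iff h.cont.aestronglyMeasurable).1 this

lemma Dec.int2 {A B : Plane → ℂ} (hA : Dec A) (hB : Dec B) {g : Plane × Plane → ℂ}
    (hg : Continuous g) {C e : ℝ} (h : ∀ z, ‖g z‖ ≤ C * (jb z.1 ^ e * jb z.2 ^ e)) :
    Integrable (fun z : Plane × Plane => g z * (A z.1 * B z.2)) (volume.prod volume) := by
  refine (((hA.nice e).int.mul_prod (hB.nice e).int).const_mul C).mono' ?_
    (Filter.Eventually.of_forall fun z => ?_)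
  · have := hA.cont
    have := hB.cont
    exact Continuous.aestronglyMeasurable (by fun_prop)
  · rw [norm_mul, norm_mul]
    refine (mul_le_mul_of_nonneg_right (h z) (by positivity)).trans (le_of_eq ?_)
    ring

/-- squared weighted norm -/
def nsq (e : ℝ) (f : Plane → ℂ) : ℝ := ∫ ξ, (jb ξ ^ e * ‖f ξ‖) ^ 2

lemma nsq_nonneg (e : ℝ) (f : Plane → ℂ) : 0 ≤ nsq e f := integral_nonneg fun _ => sq_nonneg _

lemma Dec.int_nsq {f : Plane → ℂ} (h : Dec f) (e : ℝ) :
    Integrable (fun ξ => (jb ξ ^ e * ‖f ξ‖) ^ 2) := by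
  have := (h.nice e).memLp
  have h2 : ENNReal.ofReal 2 = 2 := by norm_num
  rwa [h2, memLp_two_iff_integrable_sq (h.nice e).cont.aestronglyMeasurable] at this

lemma kappa_memLp {s : ℝ} (hs : 2 < s) : MemLp (fun p : Plane => jb p ^ (1 - s)) (ENNReal.ofReal 2) := by
  have : ENNReal.ofReal 2 = 2 := by norm_num
  rw [this, memLp_two_iff_integrable_sq (continuous_jb_rpow _).aestronglyMeasurable]
  refine (integrable_jb (e := 2 * (1 - s)) (by linarith)).congr (Filter.Eventually.of_forall fun p => ?_)
  simp only
  rw [two_mul, Real.rpow_add (jb_pos p), sq]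

lemma Dec.l1 {s : ℝ} (hs : 2 < s) {f : Plane → ℂ} (h : Dec f) :
    ∫ ξ, jb ξ ^ (2:ℝ) * ‖f ξ‖ ≤ √(∫ p : Plane, (jb p ^ (1 - s)) ^ 2) * √(nsq (s + 1) f) := by
  refine le_trans (le_of_eq ?_) (cs_real (fun x => Real.rpow_nonneg (jb_pos x).le _)
    (h.nice (s+1)).nonneg (kappa_memLp hs) (h.nice (s+1)).memLp)
  congr 1; ext p
  rw [← mul_assoc, ← Real.rpow_add (jb_pos p)]; ring_nf

/-- the symmetrized symbol -/
def sym (s : ℝ) (p q : Plane) : ℝ := cr p q * ((jb q ^ 2 - jb p ^ 2) * jb (-p-q) ^ (2 * s) +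
        jb p ^ (2 * s + 2) - jb q ^ (2 * s + 2))

lemma tri_bound {s : ℝ} (hs : 2 < s) : ∃ K, 0 < K ∧ ∀ A B : Plane → ℂ, Dec A → Dec B →
    ‖∫ z : Plane × Plane, (sym s z.1 z.2 : ℂ) * (A z.1 * A z.2 * B (-z.1 - z.2))
        ∂(volume.prod volume)‖ ≤ K * (nsq (s + 1) A * √(nsq (s + 1) B)) := by
  obtain ⟨K, hK, hsym⟩ := symbol_plane hs
  set c0 := √(∫ p : Plane, (jb p ^ (1 - s)) ^ 2) with hc0
  have hc0' : 0 ≤ c0 := Real.sqrt_nonneg _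
  refine ⟨K * (3 * c0) + 1, by positivity, fun A B hA hB => ?_⟩
  have a1 := hA.nice (s + 1)
  have b1 := hB.nice (s + 1)
  have a2 := hA.nice 2
  have b2 := hB.nice 2
  set NA := nsq (s+1) A with hNA
  set NB := nsq (s+1) B with hNB
  have hNA0 : 0 ≤ NA := nsq_nonneg _ _
  have hNB0 : 0 ≤ NB := nsq_nonneg _ _
  have i1 := a2.tri_int a1 b1
  have i2 := a1.tri_int a2 b1
  have i3 := a1.tri_int a1 b2
  have hsq : √NA * √NA = NA := Real.mul_self_sqrt hNA0
  have t1 := a2.tri1 a1 b1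
  have t2 := a1.tri2 a2 b1
  have t3 := a1.tri3 a1 b2
  have l1 := hA.l1 hs
  have l2 := hB.l1 hs
  change _ ≤ _ * (√NA * √NB) at t1 t2
  change _ ≤ _ * (√NA * √NA) at t3
  change _ ≤ c0 * √NA at l1
  change _ ≤ c0 * √NB at l2
  have t1' := t1.trans (mul_le_mul_of_nonneg_right l1 (by positivity))
  have t2' := t2.trans (mul_le_mul_of_nonneg_right l1 (by positivity))
  have t3' := t3.trans (mul_le_mul_of_nonneg_right l2 (by positivity))
  refine (norm_integral_le_of_norm_le (((i1.add i2).add i3).const_mul K)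
    (Filter.Eventually.of_forall fun z => ?_)).trans ?_
  · simp only [Pi.add_apply]
    rw [norm_mul, Complex.norm_real, Real.norm_eq_abs, norm_mul, norm_mul]
    refine (mul_le_mul_of_nonneg_right (hsym z.1 z.2) (by positivity)).trans (le_of_eq ?_)
    have e : ∀ p, jb p ^ (2:ℝ) = jb p ^ (s + 1) * jb p ^ (1 - s) := fun p => by
      rw [← Real.rpow_add (jb_pos p)]; ring_nf
    rw [e, e, e]; ring
  · rw [integral_const_mul]
    have : ∫ z : Plane × Plane, ((((fun z : Plane × Plane => jb z.1 ^ (2:ℝ) * ‖A z.1‖ *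
          (jb z.2 ^ (s+1) * ‖A z.2‖) * (jb (-z.1-z.2) ^ (s+1) * ‖B (-z.1-z.2)‖)) +
          (fun z : Plane × Plane => jb z.1 ^ (s+1) * ‖A z.1‖ *
          (jb z.2 ^ (2:ℝ) * ‖A z.2‖) * (jb (-z.1-z.2) ^ (s+1) * ‖B (-z.1-z.2)‖))) +
          (fun z : Plane × Plane => jb z.1 ^ (s+1) * ‖A z.1‖ *
          (jb z.2 ^ (s+1) * ‖A z.2‖) * (jb (-z.1-z.2) ^ (2:ℝ) * ‖B (-z.1-z.2)‖))) z)
           ∂(volume.prod volume) ≤ 3 * c0 * (NA * √NB) := by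
      rw [integral_add' (i1.add i2) i3, integral_add' i1 i2]
      calc _ ≤ c0 * √NA * (√NA * √NB) + c0 * √NA * (√NA * √NB) + c0 * √NB * (√NA * √NA) :=
            add_le_add (add_le_add t1' t2') t3'
        _ = 3 * c0 * ((√NA * √NA) * √NB) := by ring
        _ = _ := by rw [hsq]
    refine (mul_le_mul_of_nonneg_left this hK.le).trans ?_
    have : 0 ≤ NA * √NB := by positivity
    nlinarith

/-- first nonlinearity -/
def N1 (A B : Plane → ℂ) (ξ : Plane) : ℂ := ∫ η, ((cr η ξ : ℝ) : ℂ) * (A η * B (ξ - η))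

/-- second nonlinearity -/
def N2 (A : Plane → ℂ) (ξ : Plane) : ℂ :=
  ∫ η, ((cr η ξ * ‖ξ - η‖ ^ 2 : ℝ) : ℂ) * (A η * A (ξ - η))

lemma cr_sub (η ξ : Plane) : cr η (ξ - η) = cr η ξ := by
  simp only [cr, PiLp.sub_apply]; ring

lemma cr_neg (η ξ : Plane) : cr η (-ξ) = -cr η ξ := by
  simp only [cr, PiLp.neg_apply]; ring

lemma cr_add (η ξ : Plane) : cr η (η + ξ) = cr η ξ := by
  simp only [cr, PiLp.add_apply]; ring

lemma cr_swap (η ξ : Plane) : cr η ξ = - cr ξ η := by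
  simp only [cr]; ring

@[fun_prop]
lemma continuous_cr' {X : Type*} [TopologicalSpace X] {f g : X → Plane} (hf : Continuous f)
    (hg : Continuous g) : Continuous (fun x => cr (f x) (g x)) :=
  continuous_cr.comp (hf.prodMk hg)

@[fun_prop]
lemma continuous_jb_rpow' {X : Type*} [TopologicalSpace X] {f : X → Plane} (hf : Continuous f)
    (e : ℝ) : Continuous (fun x => jb (f x) ^ e) :=
  (continuous_jb_rpow e).comp hf

lemma jb_rpow_le (p q : Plane) {e : ℝ} (he : 0 ≤ e) :
    jb (p + q) ^ e ≤ 2 ^ e * (jb p ^ e * jb q ^ e) := by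
  have hp := jb_pos p
  have hq := jb_pos q
  rw [← Real.mul_rpow hp.le hq.le, ← Real.mul_rpow (by norm_num) (by positivity)]
  exact Real.rpow_le_rpow (jb_pos _).le (jb_add_le_mul p q) he

lemma jb_rpow_le_rpow (p : Plane) {e f : ℝ} (he : e ≤ f) : jb p ^ e ≤ jb p ^ f :=
  Real.rpow_le_rpow_of_exponent_le (one_le_jb _) he

lemma one_le_jb_rpow (p : Plane) {e : ℝ} (he : 0 ≤ e) : 1 ≤ jb p ^ e :=
  Real.one_le_rpow (one_le_jb p) he

lemma T1_identity {s : ℝ} (hs : 2 < s) {A B : Plane → ℂ} (hA : Dec A) (hB : Dec B)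
    (herm : ∀ ξ, A (-ξ) = star (A ξ)) :
    Integrable (fun z : Plane × Plane => ((-(cr z.1 z.2) * jb z.2 ^ (2 * s + 2) : ℝ) : ℂ) *
      (A z.1 * A z.2 * B (-z.1 - z.2))) (volume.prod volume) ∧
    ∫ ξ, ((jb ξ ^ (2 * s + 2) : ℝ) : ℂ) * (star (A ξ) * N1 A B ξ) =
      ∫ z : Plane × Plane, ((-(cr z.1 z.2) * jb z.2 ^ (2 * s + 2) : ℝ) : ℂ) *
      (A z.1 * A z.2 * B (-z.1 - z.2)) ∂(volume.prod volume) := by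
  have cA := hA.cont
  have cB := hB.cont
  have hint : Integrable (fun z : Plane × Plane => ((-(cr z.1 z.2) * jb z.2 ^ (2 * s + 2) : ℝ) : ℂ) *
      (A z.1 * A z.2 * B (-z.1 - z.2))) (volume.prod volume) := by
    obtain ⟨K, hK0, hK⟩ := hB.rdec 0
    have := hA.int2 hA (g := fun z => ((-(cr z.1 z.2) * jb z.2 ^ (2 * s + 2) : ℝ) : ℂ) *
      B (-z.1 - z.2)) (by fun_prop) (C := K) (e := 2 * s + 3) (fun z => by
        rw [norm_mul, Complex.norm_real, Real.norm_eq_abs, abs_mul, abs_neg]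
        have h1 := abs_cr_le_jb z.1 z.2
        have h2 := hK (-z.1 - z.2)
        rw [Real.rpow_zero, one_mul] at h2
        have p1 := jb_pos z.1
        have p2 := jb_pos z.2
        have h3 : jb z.1 ≤ jb z.1 ^ (2 * s + 3) := by
          have := jb_rpow_le_rpow z.1 (e := 1) (f := 2 * s + 3) (by linarith)
          rwa [Real.rpow_one] at this
        have h4 : jb z.2 * jb z.2 ^ (2 * s + 2) = jb z.2 ^ (2 * s + 3) := by
          rw [mul_comm, ← Real.rpow_add_one p2.ne']; ring_nf
        rw [abs_of_pos (by positivity : 0 < jb z.2 ^ (2 * s + 2))]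
        calc _ ≤ (jb z.1 * jb z.2) * jb z.2 ^ (2 * s + 2) * K := by gcongr
          _ = jb z.1 * (jb z.2 * jb z.2 ^ (2 * s + 2)) * K := by ring
          _ ≤ jb z.1 ^ (2 * s + 3) * jb z.2 ^ (2 * s + 3) * K := by rw [h4]; gcongr
          _ = _ := by ring)
    refine this.congr (Filter.Eventually.of_forall fun z => ?_)
    simp only; ring
  refine ⟨hint, ?_⟩
  rw [integral_prod_symm _ hint, ← integral_neg_eq_self]
  congr 1; ext q
  rw [jb_neg, herm, star_star, N1, ← integral_const_mul, ← integral_const_mul]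
  congr 1; ext p
  rw [cr_neg, neg_sub_comm]
  push_cast
  ring

lemma T2_identity {s : ℝ} (hs : 2 < s) {A B : Plane → ℂ} (hA : Dec A) (hB : Dec B)
    (herm : ∀ ξ, B (-ξ) = star (B ξ)) :
    Integrable (fun z : Plane × Plane => ((cr z.1 z.2 * ‖z.2‖ ^ 2 * jb (-z.1-z.2) ^ (2 * s) : ℝ) : ℂ) *
      (A z.1 * A z.2 * B (-z.1 - z.2))) (volume.prod volume) ∧
    ∫ ξ, ((jb ξ ^ (2 * s) : ℝ) : ℂ) * (star (B ξ) * N2 A ξ) =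
      ∫ z : Plane × Plane, ((cr z.1 z.2 * ‖z.2‖ ^ 2 * jb (-z.1-z.2) ^ (2 * s) : ℝ) : ℂ) *
      (A z.1 * A z.2 * B (-z.1 - z.2)) ∂(volume.prod volume) := by
  have cA := hA.cont
  have cB := hB.cont
  have hint : Integrable (fun z : Plane × Plane =>
      ((cr z.1 z.2 * ‖z.2‖ ^ 2 * jb (-z.1-z.2) ^ (2 * s) : ℝ) : ℂ) *
      (A z.1 * A z.2 * B (-z.1 - z.2))) (volume.prod volume) := by
    obtain ⟨K, hK0, hK⟩ := hB.rdec (2 * s)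
    have := hA.int2 hA (g := fun z => ((cr z.1 z.2 * ‖z.2‖ ^ 2 * jb (-z.1-z.2) ^ (2 * s) : ℝ) : ℂ) *
      B (-z.1 - z.2)) (by fun_prop) (C := K) (e := 3) (fun z => by
        rw [norm_mul, Complex.norm_real, Real.norm_eq_abs, abs_mul, abs_mul]
        have h1 := abs_cr_le_jb z.1 z.2
        have h2 := hK (-z.1 - z.2)
        have p1 := jb_pos z.1
        have p2 := jb_pos z.2
        have p3 := jb_pos (-z.1-z.2)
        have h3 : jb z.1 ≤ jb z.1 ^ (3:ℝ) := by
          have := jb_rpow_le_rpow z.1 (e := 1) (f := 3) (by norm_num)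
          rwa [Real.rpow_one] at this
        have h4 : jb z.2 * jb z.2 ^ 2 = jb z.2 ^ (3:ℝ) := by
          rw [show (3:ℝ) = ((3:ℕ):ℝ) by norm_num, Real.rpow_natCast]; ring
        have h5 := norm_le_jb z.2
        rw [abs_of_pos (by positivity : 0 < jb (-z.1-z.2) ^ (2 * s)), abs_of_nonneg (sq_nonneg ‖z.2‖)]
        calc _ = |cr z.1 z.2| * ‖z.2‖ ^ 2 * (jb (-z.1-z.2) ^ (2 * s) * ‖B (-z.1-z.2)‖) := by ring
          _ ≤ (jb z.1 * jb z.2) * jb z.2 ^ 2 * K := by gcongr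
          _ = jb z.1 * (jb z.2 * jb z.2 ^ 2) * K := by ring
          _ ≤ jb z.1 ^ (3:ℝ) * jb z.2 ^ (3:ℝ) * K := by rw [h4]; gcongr
          _ = _ := by ring)
    refine this.congr (Filter.Eventually.of_forall fun z => ?_)
    simp only; ring
  refine ⟨hint, ?_⟩
  have hint2 : Integrable (fun z : Plane × Plane =>
      ((jb z.1 ^ (2 * s) * (cr z.2 z.1 * ‖z.1 - z.2‖ ^ 2) : ℝ) : ℂ) *
      A (z.1 - z.2) * (star (B z.1) * A z.2)) (volume.prod volume) := by
    obtain ⟨K, hK0, hK⟩ := hA.rdec 2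
    have hB' : Dec (fun ξ => star (B ξ)) := ⟨by fun_prop, by simpa using hB.dec⟩
    refine hB'.int2 hA (g := fun z => ((jb z.1 ^ (2 * s) * (cr z.2 z.1 * ‖z.1 - z.2‖ ^ 2) : ℝ) : ℂ) *
      A (z.1 - z.2)) (by fun_prop) (C := K) (e := 2 * s + 1) (fun z => ?_)
    rw [norm_mul, Complex.norm_real, Real.norm_eq_abs, abs_mul, abs_mul]
    have h1 := abs_cr_le_jb z.2 z.1
    have h2 := hK (z.1 - z.2)
    have p1 := jb_pos z.1
    have p2 := jb_pos z.2
    have p3 := jb_pos (z.1-z.2)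
    rw [Real.rpow_two] at h2
    have h3 : jb z.2 ≤ jb z.2 ^ (2 * s + 1) := by
      have := jb_rpow_le_rpow z.2 (e := 1) (f := 2 * s + 1) (by linarith)
      rwa [Real.rpow_one] at this
    have h4 : jb z.1 ^ (2 * s) * jb z.1 = jb z.1 ^ (2 * s + 1) := by
      rw [Real.rpow_add_one p1.ne']
    have h5 := norm_le_jb (z.1 - z.2)
    rw [abs_of_pos (by positivity : 0 < jb z.1 ^ (2 * s)), abs_of_nonneg (sq_nonneg ‖z.1 - z.2‖)]
    calc _ = jb z.1 ^ (2 * s) * |cr z.2 z.1| * (‖z.1 - z.2‖ ^ 2 * ‖A (z.1-z.2)‖) := by ring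
      _ ≤ jb z.1 ^ (2 * s) * (jb z.2 * jb z.1) * (jb (z.1 - z.2) ^ 2 * ‖A (z.1-z.2)‖) := by gcongr
      _ ≤ jb z.1 ^ (2 * s) * (jb z.2 * jb z.1) * K := by gcongr
      _ = (jb z.1 ^ (2 * s) * jb z.1) * jb z.2 * K := by ring
      _ ≤ jb z.1 ^ (2 * s + 1) * jb z.2 ^ (2 * s + 1) * K := by rw [h4]; gcongr
      _ = _ := by ring
  rw [integral_prod _ hint]
  have e1 : ∀ ξ, ((jb ξ ^ (2 * s) : ℝ) : ℂ) * (star (B ξ) * N2 A ξ) =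
      ∫ η, ((jb ξ ^ (2 * s) * (cr η ξ * ‖ξ - η‖ ^ 2) : ℝ) : ℂ) *
      A (ξ - η) * (star (B ξ) * A η) := by
    intro ξ
    rw [N2, ← integral_const_mul, ← integral_const_mul]
    congr 1; ext η
    push_cast; ring
  simp_rw [e1]
  rw [integral_integral_swap hint2]
  congr 1; ext p
  rw [← integral_add_left_eq_self _ p]
  congr 1; ext q
  rw [add_sub_cancel_left, cr_add, show -p - q = -(p + q) by abel, jb_neg, herm]
  push_cast; ring

lemma energy_identity {s : ℝ} (hs : 2 < s) {A B : Plane → ℂ} (hA : Dec A) (hB : Dec B)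
    (hermA : ∀ ξ, A (-ξ) = star (A ξ)) (hermB : ∀ ξ, B (-ξ) = star (B ξ)) :
    (∫ ξ, ((jb ξ ^ (2 * s + 2) : ℝ) : ℂ) * (star (A ξ) * N1 A B ξ)) +
      ∫ ξ, ((jb ξ ^ (2 * s) : ℝ) : ℂ) * (star (B ξ) * N2 A ξ) =
    (1/2) * ∫ z : Plane × Plane, (sym s z.1 z.2 : ℂ) * (A z.1 * A z.2 * B (-z.1 - z.2))
        ∂(volume.prod volume) := by
  obtain ⟨i1, e1⟩ := T1_identity hs hA hB hermA
  obtain ⟨i2, e2⟩ := T2_identity hs hA hB hermB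
  rw [e1, e2, ← integral_add i1 i2]
  have i3 := i1.add i2
  set f : Plane × Plane → ℂ := fun z => ((-(cr z.1 z.2) * jb z.2 ^ (2 * s + 2) : ℝ) : ℂ) *
      (A z.1 * A z.2 * B (-z.1 - z.2)) +
      ((cr z.1 z.2 * ‖z.2‖ ^ 2 * jb (-z.1-z.2) ^ (2 * s) : ℝ) : ℂ) *
      (A z.1 * A z.2 * B (-z.1 - z.2)) with hf
  have i4 : Integrable f (volume.prod volume) := i3
  have key : ∀ z : Plane × Plane, (sym s z.1 z.2 : ℂ) * (A z.1 * A z.2 * B (-z.1 - z.2)) =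
      f z + f z.swap := by
    intro z
    simp only [hf, Prod.fst_swap, Prod.snd_swap, sym]
    rw [cr_swap z.2 z.1, show -z.2 - z.1 = -z.1 - z.2 by abel, jb_sq, jb_sq]
    push_cast; ring
  simp_rw [key]
  have i5 : Integrable (fun z : Plane × Plane => f z.swap) (volume.prod volume) := i4.swap
  rw [integral_add i4 i5, integral_prod_swap]
  ring

/-- integral of the reference weight -/
def J3 : ℝ := ∫ p : Plane, jb p ^ (-3:ℝ)

lemma J3_nonneg : 0 ≤ J3 := integral_nonneg fun p => Real.rpow_nonneg (jb_pos p).le _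

lemma conv_dec {A B : Plane → ℂ} {g : Plane → Plane → ℝ}
    (hg : ∀ ξ η, |g ξ η| ≤ jb η * jb (ξ - η) ^ 3) {N : ℕ} {K : ℝ}
    (hA : ∀ ξ, ‖A ξ‖ * jb ξ ^ (N + 4) ≤ K) (hB : ∀ ξ, ‖B ξ‖ * jb ξ ^ (N + 4) ≤ K) (ξ : Plane) :
    ‖∫ η, (g ξ η : ℂ) * (A η * B (ξ - η))‖ * jb ξ ^ N ≤ 2 ^ N * K * K * J3 := by
  have hK : 0 ≤ K := le_trans (by have := jb_pos 0; positivity) (hA 0)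
  have pξ := jb_pos ξ
  rw [← le_div_iff₀ (by positivity)]
  have : 2 ^ N * K * K * J3 / jb ξ ^ N = ∫ η, (2 ^ N * K * K / jb ξ ^ N) * jb η ^ (-3:ℝ) := by
    rw [integral_const_mul, J3]; ring
  rw [this]
  refine norm_integral_le_of_norm_le ((integrable_jb (by norm_num)).const_mul _)
    (Filter.Eventually.of_forall fun η => ?_)
  have p1 := jb_pos η
  have p2 := jb_pos (ξ - η)
  rw [Real.rpow_neg p1.le, ← div_eq_mul_inv, div_div, le_div_iff₀ (by positivity), norm_mul,
    Complex.norm_real, Real.norm_eq_abs, norm_mul]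
  have hx : jb ξ ≤ 2 * (jb η * jb (ξ - η)) := by
    have := jb_add_le_mul η (ξ - η)
    rwa [add_sub_cancel] at this
  have e3 : jb η ^ (3:ℝ) = jb η ^ 3 := by
    rw [show (3:ℝ) = ((3:ℕ):ℝ) by norm_num, Real.rpow_natCast]
  rw [e3]
  have hb : ‖B (ξ - η)‖ * jb (ξ - η) ^ (N + 3) ≤ K := by
    refine le_trans ?_ (hB (ξ - η))
    gcongr
    · exact one_le_jb _
    · norm_num
  calc _ ≤ (jb η * jb (ξ - η) ^ 3) * (‖A η‖ * ‖B (ξ - η)‖) *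
        ((2 * (jb η * jb (ξ - η))) ^ N * jb η ^ 3) := by
          gcongr
          exact hg _ _
    _ = 2 ^ N * (‖A η‖ * jb η ^ (N + 4)) * (‖B (ξ - η)‖ * jb (ξ - η) ^ (N + 3)) := by ring
    _ ≤ 2 ^ N * K * K := by
          gcongr
          exact hA η

lemma N1_dec {A B : Plane → ℂ} {N : ℕ} {K : ℝ}
    (hA : ∀ ξ, ‖A ξ‖ * jb ξ ^ (N + 4) ≤ K) (hB : ∀ ξ, ‖B ξ‖ * jb ξ ^ (N + 4) ≤ K) (ξ : Plane) :
    ‖N1 A B ξ‖ * jb ξ ^ N ≤ 2 ^ N * K * K * J3 :=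
  conv_dec (g := fun ξ η => cr η ξ) (fun ξ η => by
    rw [← cr_sub]
    refine (abs_cr_le_jb _ _).trans ?_
    have := jb_pos η
    gcongr
    exact le_self_pow₀ (one_le_jb _) (by norm_num)) hA hB ξ

lemma N2_dec {A : Plane → ℂ} {N : ℕ} {K : ℝ}
    (hA : ∀ ξ, ‖A ξ‖ * jb ξ ^ (N + 4) ≤ K) (ξ : Plane) :
    ‖N2 A ξ‖ * jb ξ ^ N ≤ 2 ^ N * K * K * J3 :=
  conv_dec (g := fun ξ η => cr η ξ * ‖ξ - η‖ ^ 2) (fun ξ η => by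
    rw [← cr_sub, abs_mul, abs_of_nonneg (sq_nonneg ‖ξ - η‖)]
    have := jb_pos η
    have := jb_pos (ξ - η)
    have := norm_le_jb (ξ - η)
    calc _ ≤ (jb η * jb (ξ - η)) * jb (ξ - η) ^ 2 := by
          gcongr
          exact abs_cr_le_jb _ _
      _ = _ := by ring) hA hA ξ

lemma N1_meas {A B : Plane → ℂ} (hA : Continuous A) (hB : Continuous B) :
    StronglyMeasurable (N1 A B) := by
  have : StronglyMeasurable (fun z : Plane × Plane => ((cr z.2 z.1 : ℝ) : ℂ) * (A z.2 * B (z.1 - z.2))) :=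
    Continuous.stronglyMeasurable (by fun_prop)
  exact this.integral_prod_right'

lemma N2_meas {A : Plane → ℂ} (hA : Continuous A) :
    StronglyMeasurable (N2 A) := by
  have : StronglyMeasurable (fun z : Plane × Plane => ((cr z.2 z.1 * ‖z.1 - z.2‖ ^ 2 : ℝ) : ℂ) *
      (A z.2 * A (z.1 - z.2))) :=
    Continuous.stronglyMeasurable (by fun_prop)
  exact this.integral_prod_right'

lemma sq_bound {x y w : ℝ} {ξ : Plane} {e K : ℝ} {N : ℕ} (hN : 2 * e + 3 ≤ N) (hx : 0 ≤ x) (hy : 0 ≤ y)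
    (hxK : x * jb ξ ^ N ≤ K) (hyK : y * jb ξ ^ N ≤ K) (hw : w = jb ξ ^ (2 * e)) :
    w * (x * y) ≤ K ^ 2 * jb ξ ^ (-3:ℝ) := by
  subst hw
  have hp := jb_pos ξ
  have h1 : x ≤ K := by
    refine le_trans ?_ hxK
    exact le_mul_of_one_le_right hx (one_le_pow₀ (one_le_jb ξ))
  have hK : 0 ≤ K := hx.trans h1
  have h2 : jb ξ ^ (2 * e) ≤ jb ξ ^ N * jb ξ ^ (-3:ℝ) := by
    rw [← Real.rpow_natCast, ← Real.rpow_add hp]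
    exact jb_rpow_le_rpow ξ (by linarith)
  calc jb ξ ^ (2 * e) * (x * y) ≤ (jb ξ ^ N * jb ξ ^ (-3:ℝ)) * (x * y) := by gcongr
    _ = x * (y * jb ξ ^ N) * jb ξ ^ (-3:ℝ) := by ring
    _ ≤ K * K * jb ξ ^ (-3:ℝ) := by gcongr
    _ = _ := by ring

lemma nsq_integrand (e : ℝ) (f : Plane → ℂ) (ξ : Plane) :
    (jb ξ ^ e * ‖f ξ‖) ^ 2 = jb ξ ^ (2 * e) * (‖f ξ‖ * ‖f ξ‖) := by
  have : jb ξ ^ (2 * e) = jb ξ ^ e * jb ξ ^ e := by rw [two_mul, Real.rpow_add (jb_pos ξ)]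
  rw [this]; ring

lemma nsq_hasDerivAt {e K t δ : ℝ} {N : ℕ} (hN : 2 * e + 3 ≤ N) (hδ : 0 < δ) {A A' : ℝ → Plane → ℂ}
    (hc : ∀ τ, |τ - t| < δ → Continuous (A τ))
    (hm : AEStronglyMeasurable (A' t))
    (hA : ∀ τ, |τ - t| < δ → ∀ ξ, ‖A τ ξ‖ * jb ξ ^ N ≤ K)
    (hA' : ∀ τ, |τ - t| < δ → ∀ ξ, ‖A' τ ξ‖ * jb ξ ^ N ≤ K)
    (hd : ∀ τ, |τ - t| < δ → ∀ ξ, HasDerivAt (fun r => A r ξ) (A' τ ξ) τ) :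
    Integrable (fun ξ => jb ξ ^ (2 * e) * (2 * inner ℝ (A t ξ) (A' t ξ))) ∧
    HasDerivAt (fun τ => nsq e (A τ)) (∫ ξ, jb ξ ^ (2 * e) * (2 * inner ℝ (A t ξ) (A' t ξ))) t := by
  have ht : |t - t| < δ := by simpa using hδ
  have hmem : ∀ τ, τ ∈ Metric.ball t δ → |τ - t| < δ := fun τ h => by
    rwa [Metric.mem_ball, Real.dist_eq] at h
  unfold nsq
  simp only [nsq_integrand]
  refine hasDerivAt_integral_of_dominated_loc_of_deriv_le (Metric.ball_mem_nhds t hδ)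
    (bound := fun ξ => 2 * (K ^ 2 * jb ξ ^ (-3:ℝ))) 
    (F := fun τ ξ => jb ξ ^ (2 * e) * (‖A τ ξ‖ * ‖A τ ξ‖))
    (F' := fun τ ξ => jb ξ ^ (2 * e) * (2 * inner ℝ (A τ ξ) (A' τ ξ))) ?_ ?_ ?_ ?_ ?_ ?_
  · filter_upwards [Metric.ball_mem_nhds t hδ] with τ hτ
    have := hc τ (hmem τ hτ)
    exact Continuous.aestronglyMeasurable (by fun_prop)
  · refine ((integrable_jb (e := -3) (by norm_num)).const_mul (K ^ 2)).mono'
      (by have := hc t ht; exact Continuous.aestronglyMeasurable (by fun_prop))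
      (Filter.Eventually.of_forall fun ξ => ?_)
    have := jb_pos ξ
    rw [Real.norm_of_nonneg (by positivity)]
    exact sq_bound hN (norm_nonneg _) (norm_nonneg _) (hA t ht ξ) (hA t ht ξ) rfl
  · refine AEStronglyMeasurable.mul (continuous_jb_rpow _).aestronglyMeasurable ?_
    exact ((hc t ht).aestronglyMeasurable.inner hm).const_mul 2
  · refine Filter.Eventually.of_forall fun ξ τ hτ => ?_
    have := jb_pos ξ
    rw [norm_mul, norm_mul, Real.norm_of_nonneg (by positivity : 0 ≤ jb ξ ^ (2 * e)), Real.norm_two]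
    have h1 := norm_inner_le_norm (𝕜 := ℝ) (A τ ξ) (A' τ ξ)
    have h2 := sq_bound hN (norm_nonneg _) (norm_nonneg _) (hA τ (hmem τ hτ) ξ) (hA' τ (hmem τ hτ) ξ) rfl
    calc _ ≤ jb ξ ^ (2 * e) * (2 * (‖A τ ξ‖ * ‖A' τ ξ‖)) := by gcongr
      _ = 2 * (jb ξ ^ (2 * e) * (‖A τ ξ‖ * ‖A' τ ξ‖)) := by ring
      _ ≤ _ := by gcongr
  · exact ((integrable_jb (e := -3) (by norm_num)).const_mul (K ^ 2)).const_mul 2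
  · refine Filter.Eventually.of_forall fun ξ τ hτ => ?_
    have := (hd τ (hmem τ hτ) ξ).norm_sq
    simp only [pow_two] at this
    exact this.const_mul _

lemma nsq_cont {e K δ T' : ℝ} {N : ℕ} (hN : 2 * e + 3 ≤ N) (hδ : 0 < δ) {A : ℝ → Plane → ℂ}
    (hc : ∀ τ ∈ Set.Ico 0 T', Continuous (A τ))
    (hA : ∀ τ ∈ Set.Ico 0 T', |τ - 0| < δ → ∀ ξ, ‖A τ ξ‖ * jb ξ ^ N ≤ K)
    (hd : ∀ ξ, ContinuousWithinAt (fun r => A r ξ) (Set.Ico 0 T') 0) :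
    ContinuousWithinAt (fun τ => nsq e (A τ)) (Set.Ico 0 T') 0 := by
  unfold nsq
  simp only [nsq_integrand]
  refine continuousWithinAt_of_dominated (bound := fun ξ => K ^ 2 * jb ξ ^ (-3:ℝ)) ?_ ?_ ?_ ?_
  · filter_upwards [self_mem_nhdsWithin] with τ hτ
    have := hc τ hτ
    exact Continuous.aestronglyMeasurable (by fun_prop)
  · filter_upwards [self_mem_nhdsWithin, mem_nhdsWithin_of_mem_nhds (Metric.ball_mem_nhds 0 hδ)] with τ hτ h2
    refine Filter.Eventually.of_forall fun ξ => ?_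
    have := jb_pos ξ
    rw [Metric.mem_ball, Real.dist_eq] at h2
    rw [Real.norm_of_nonneg (by positivity)]
    exact sq_bound hN (norm_nonneg _) (norm_nonneg _) (hA τ hτ h2 ξ) (hA τ hτ h2 ξ) rfl
  · exact ((integrable_jb (e := -3) (by norm_num)).const_mul (K ^ 2))
  · refine Filter.Eventually.of_forall fun ξ => ?_
    have := (hd ξ).norm
    exact (this.mul this).const_mul _

/-- Fourier-side solution. -/
structure Sol (ν T' : ℝ) (A B : ℝ → Plane → ℂ) : Prop where
  cA : ∀ t ∈ Set.Ico 0 T', Continuous (A t)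
  cB : ∀ t ∈ Set.Ico 0 T', Continuous (B t)
  dec : ∀ t ∈ Set.Ico 0 T', ∀ N : ℕ, ∃ δ > 0, ∃ K : ℝ, ∀ τ ∈ Set.Ico 0 T', |τ - t| < δ →
    ∀ ξ, ‖A τ ξ‖ * jb ξ ^ N ≤ K ∧ ‖B τ ξ‖ * jb ξ ^ N ≤ K
  hermA : ∀ t ∈ Set.Ico 0 T', ∀ ξ, A t (-ξ) = star (A t ξ)
  hermB : ∀ t ∈ Set.Ico 0 T', ∀ ξ, B t (-ξ) = star (B t ξ)
  zA : ∀ ξ, ContinuousWithinAt (fun r => A r ξ) (Set.Ico 0 T') 0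
  zB : ∀ ξ, ContinuousWithinAt (fun r => B r ξ) (Set.Ico 0 T') 0
  dA : ∀ t ∈ Set.Ioo 0 T', ∀ ξ,
    HasDerivAt (fun r => A r ξ) (-((4 * π ^ 2 : ℝ) : ℂ) * N1 (A t) (B t) ξ) t
  dB : ∀ t ∈ Set.Ioo 0 T', ∀ ξ, HasDerivAt (fun r => B r ξ)
    (-((16 * π ^ 4 : ℝ) : ℂ) * N2 (A t) ξ - ((4 * π ^ 2 * ν * ‖ξ‖ ^ 2 : ℝ) : ℂ) * B t ξ) t

lemma Sol.DecA {ν T' : ℝ} {A B : ℝ → Plane → ℂ} (h : Sol ν T' A B) {t : ℝ} (ht : t ∈ Set.Ico 0 T') :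
    Dec (A t) := ⟨h.cA t ht, fun N => by
      obtain ⟨δ, hδ, K, hK⟩ := h.dec t ht N
      exact ⟨K, fun ξ => (hK t ht (by simpa using hδ) ξ).1⟩⟩

lemma Sol.DecB {ν T' : ℝ} {A B : ℝ → Plane → ℂ} (h : Sol ν T' A B) {t : ℝ} (ht : t ∈ Set.Ico 0 T') :
    Dec (B t) := ⟨h.cB t ht, fun N => by
      obtain ⟨δ, hδ, K, hK⟩ := h.dec t ht N
      exact ⟨K, fun ξ => (hK t ht (by simpa using hδ) ξ).2⟩⟩

lemma Sol.local {ν T' : ℝ} {A B : ℝ → Plane → ℂ} (h : Sol ν T' A B) {t : ℝ} (ht : t ∈ Set.Ioo 0 T')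
    (N : ℕ) : ∃ δ > 0, ∃ K : ℝ, 0 ≤ K ∧ ∀ τ, |τ - t| < δ → τ ∈ Set.Ioo 0 T' ∧
    ∀ ξ, ‖A τ ξ‖ * jb ξ ^ N ≤ K ∧ ‖B τ ξ‖ * jb ξ ^ N ≤ K := by
  obtain ⟨δ, hδ, K, hK⟩ := h.dec t ⟨ht.1.le, ht.2⟩ N
  refine ⟨min δ (min t (T' - t)), lt_min hδ (lt_min ht.1 (by linarith [ht.2])), K, ?_, fun τ hτ => ?_⟩
  · have h1 := (hK t ⟨ht.1.le, ht.2⟩ (by simpa using hδ) 0).1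
    have h2 := jb_pos 0
    exact le_trans (by positivity) h1
  · rw [lt_min_iff, lt_min_iff, abs_lt, abs_lt, abs_lt] at hτ
    have : τ ∈ Set.Ioo 0 T' := ⟨by linarith, by linarith⟩
    exact ⟨this, hK τ ⟨this.1.le, this.2⟩ (abs_lt.2 hτ.1)⟩

lemma inner_eq (z w : ℂ) : inner ℝ z w = (star z * w).re := by
  rw [Complex.inner, mul_comm]; rfl

lemma pow_weaken {x K : ℝ} {ξ : Plane} {n m : ℕ} (hx : 0 ≤ x) (hnm : n ≤ m) (h : x * jb ξ ^ m ≤ K) :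
    x * jb ξ ^ n ≤ K := by
  refine le_trans ?_ h
  gcongr
  exact one_le_jb ξ

lemma int_pair {e K : ℝ} {N : ℕ} (hN : 2 * e + 3 ≤ N) {f g : Plane → ℂ}
    (hf : AEStronglyMeasurable f) (hg : AEStronglyMeasurable g)
    (hfK : ∀ ξ, ‖f ξ‖ * jb ξ ^ N ≤ K) (hgK : ∀ ξ, ‖g ξ‖ * jb ξ ^ N ≤ K) :
    Integrable (fun ξ => ((jb ξ ^ (2 * e) : ℝ) : ℂ) * (star (f ξ) * g ξ)) := by
  refine ((integrable_jb (e := -3) (by norm_num)).const_mul (K ^ 2)).mono' ?_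
      (Filter.Eventually.of_forall fun ξ => ?_)
  · exact (Continuous.aestronglyMeasurable (by fun_prop)).mul (hf.star.mul hg)
  · have := jb_pos ξ
    rw [norm_mul, norm_mul, norm_star, Complex.norm_real, Real.norm_of_nonneg (by positivity)]
    exact sq_bound hN (norm_nonneg _) (norm_nonneg _) (hfK ξ) (hgK ξ) rfl

lemma re_int {f : Plane → ℂ} (h : Integrable f) : ∫ x, (f x).re = (∫ x, f x).re :=
  Complex.reCLM.integral_comp_comm h

lemma Sol.derivA {ν T' s : ℝ} {A B : ℝ → Plane → ℂ} (h : Sol ν T' A B) {t : ℝ} (ht : t ∈ Set.Ioo 0 T') :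
    HasDerivAt (fun τ => nsq (s + 1) (A τ))
      (-(8 * π ^ 2) * (∫ ξ, ((jb ξ ^ (2 * s + 2) : ℝ) : ℂ) * (star (A t ξ) * N1 (A t) (B t) ξ)).re) t := by
  obtain ⟨N, hN⟩ := exists_nat_ge (2 * (s + 1) + 3)
  obtain ⟨δ, hδ, K, hK0, hK⟩ := h.local ht (N + 4)
  have hJ := J3_nonneg
  have hcA := h.cA t ⟨ht.1.le, ht.2⟩
  have hcB := h.cB t ⟨ht.1.le, ht.2⟩
  have hmN := N1_meas hcA hcB
  obtain ⟨hi, hd⟩ := nsq_hasDerivAt (e := s + 1) (A := A) (t := t)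
    (A' := fun τ ξ => -((4 * π ^ 2 : ℝ) : ℂ) * N1 (A τ) (B τ) ξ)
    (K := K + 4 * π ^ 2 * (2 ^ N * K * K * J3)) hN hδ
    (fun τ hτ => h.cA τ ⟨(hK τ hτ).1.1.le, (hK τ hτ).1.2⟩)
    (hmN.aestronglyMeasurable.const_mul _)
    (fun τ hτ ξ => by
      have := pow_weaken (norm_nonneg _) (Nat.le_add_right N 4) ((hK τ hτ).2 ξ).1
      have : 0 ≤ 4 * π ^ 2 * (2 ^ N * K * K * J3) := by positivity
      linarith)
    (fun τ hτ ξ => by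
      have h1 := N1_dec (N := N) (fun ξ => ((hK τ hτ).2 ξ).1) (fun ξ => ((hK τ hτ).2 ξ).2) ξ
      rw [norm_mul, norm_neg, Complex.norm_real, Real.norm_of_nonneg (by positivity), mul_assoc]
      have : 4 * π ^ 2 * (‖N1 (A τ) (B τ) ξ‖ * jb ξ ^ N) ≤ 4 * π ^ 2 * (2 ^ N * K * K * J3) := by gcongr
      linarith)
    (fun τ hτ ξ => h.dA τ (hK τ hτ).1 ξ)
  convert hd using 1
  have e1 : ∀ ξ, jb ξ ^ (2 * (s + 1)) * (2 * inner ℝ (A t ξ) (-((4 * π ^ 2 : ℝ) : ℂ) * N1 (A t) (B t) ξ))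
      = (-(8 * π ^ 2)) * (((jb ξ ^ (2 * s + 2) : ℝ) : ℂ) * (star (A t ξ) * N1 (A t) (B t) ξ)).re := by
    intro ξ
    rw [inner_eq, Complex.re_ofReal_mul, show star (A t ξ) * (-((4 * π ^ 2 : ℝ) : ℂ) * N1 (A t) (B t) ξ) =
      ((-(4 * π ^ 2) : ℝ) : ℂ) * (star (A t ξ) * N1 (A t) (B t) ξ) by push_cast; ring, Complex.re_ofReal_mul]
    ring_nf
  simp only [e1] at hi ⊢
  rw [integral_const_mul]
  congr 1
  refine (re_int ?_).symm
  have := int_pair (e := s + 1) (K := K + (2 ^ N * K * K * J3)) (f := A t) (g := N1 (A t) (B t)) hN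
    hcA.aestronglyMeasurable hmN.aestronglyMeasurable (fun ξ => by
      have := pow_weaken (norm_nonneg _) (Nat.le_add_right N 4) ((hK t (by simpa using hδ)).2 ξ).1
      have : 0 ≤ (2 ^ N * K * K * J3) := by positivity
      linarith) (fun ξ => by
      have h1 := N1_dec (N := N) (fun ξ => ((hK t (by simpa using hδ)).2 ξ).1)
        (fun ξ => ((hK t (by simpa using hδ)).2 ξ).2) ξ
      linarith)
  rwa [show 2 * (s + 1) = 2 * s + 2 by ring] at this

lemma Sol.derivB {ν T' s : ℝ} {A B : ℝ → Plane → ℂ} (h : Sol ν T' A B) (hν : 0 < ν)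
    {t : ℝ} (ht : t ∈ Set.Ioo 0 T') :
    HasDerivAt (fun τ => nsq s (B τ))
      (-(32 * π ^ 4) * (∫ ξ, ((jb ξ ^ (2 * s) : ℝ) : ℂ) * (star (B t ξ) * N2 (A t) ξ)).re
        - 8 * π ^ 2 * ν * (nsq (s + 1) (B t) - nsq s (B t))) t := by
  obtain ⟨N, hN⟩ := exists_nat_ge (2 * s + 3)
  obtain ⟨δ, hδ, K, hK0, hK⟩ := h.local ht (N + 4)
  have hJ := J3_nonneg
  have ht' : t ∈ Set.Ico 0 T' := ⟨ht.1.le, ht.2⟩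
  have hcA := h.cA t ht'
  have hcB := h.cB t ht'
  have hmN := N2_meas hcA
  have hpos1 : 0 ≤ (2 ^ N * K * K * J3) := by positivity
  obtain ⟨hi, hd⟩ := nsq_hasDerivAt (e := s) (A := B) (t := t)
    (A' := fun τ ξ => -((16 * π ^ 4 : ℝ) : ℂ) * N2 (A τ) ξ - ((4 * π ^ 2 * ν * ‖ξ‖ ^ 2 : ℝ) : ℂ) * B τ ξ)
    (K := K + 16 * π ^ 4 * (2 ^ N * K * K * J3) + 4 * π ^ 2 * ν * K) hN hδ
    (fun τ hτ => h.cB τ ⟨(hK τ hτ).1.1.le, (hK τ hτ).1.2⟩)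
    ((hmN.aestronglyMeasurable.const_mul _).sub (Continuous.aestronglyMeasurable (by fun_prop)))
    (fun τ hτ ξ => by
      have := pow_weaken (norm_nonneg _) (Nat.le_add_right N 4) ((hK τ hτ).2 ξ).2
      have : 0 ≤ 16 * π ^ 4 * (2 ^ N * K * K * J3) + 4 * π ^ 2 * ν * K := by positivity
      linarith)
    (fun τ hτ ξ => by
      have h1 := N2_dec (N := N) (fun ξ => ((hK τ hτ).2 ξ).1) ξ
      have hp := jb_pos ξ
      have h2 : ‖ξ‖ ^ 2 * (‖B τ ξ‖ * jb ξ ^ N) ≤ K := by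
        refine le_trans ?_ (pow_weaken (norm_nonneg _) (by omega : N + 2 ≤ N + 4) ((hK τ hτ).2 ξ).2)
        rw [pow_add]
        have : ‖ξ‖ ^ 2 ≤ jb ξ ^ 2 := by gcongr; exact norm_le_jb ξ
        calc _ ≤ jb ξ ^ 2 * (‖B τ ξ‖ * jb ξ ^ N) := by gcongr
          _ = _ := by ring
      have h3 : 16 * π ^ 4 * (‖N2 (A τ) ξ‖ * jb ξ ^ N) ≤ 16 * π ^ 4 * (2 ^ N * K * K * J3) := by gcongr
      have h4 : 4 * π ^ 2 * ν * (‖ξ‖ ^ 2 * (‖B τ ξ‖ * jb ξ ^ N)) ≤ 4 * π ^ 2 * ν * K := by gcongr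
      calc _ ≤ (‖-((16 * π ^ 4 : ℝ) : ℂ) * N2 (A τ) ξ‖ + ‖((4 * π ^ 2 * ν * ‖ξ‖ ^ 2 : ℝ) : ℂ) * B τ ξ‖)
            * jb ξ ^ N := by gcongr; exact norm_sub_le _ _
        _ = 16 * π ^ 4 * (‖N2 (A τ) ξ‖ * jb ξ ^ N) + 4 * π ^ 2 * ν * (‖ξ‖ ^ 2 * (‖B τ ξ‖ * jb ξ ^ N)) := by
          rw [norm_mul, norm_neg, Complex.norm_real, Real.norm_of_nonneg (by positivity), norm_mul,
            Complex.norm_real, Real.norm_of_nonneg (by positivity)]; ring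
        _ ≤ _ := by linarith)
    (fun τ hτ ξ => h.dB τ (hK τ hτ).1 ξ)
  convert hd using 1
  have e1 : ∀ ξ, jb ξ ^ (2 * s) * (2 * inner ℝ (B t ξ) (-((16 * π ^ 4 : ℝ) : ℂ) * N2 (A t) ξ
        - ((4 * π ^ 2 * ν * ‖ξ‖ ^ 2 : ℝ) : ℂ) * B t ξ))
      = (-(32 * π ^ 4)) * (((jb ξ ^ (2 * s) : ℝ) : ℂ) * (star (B t ξ) * N2 (A t) ξ)).re
        - 8 * π ^ 2 * ν * ((jb ξ ^ (s + 1) * ‖B t ξ‖) ^ 2 - (jb ξ ^ s * ‖B t ξ‖) ^ 2) := by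
    intro ξ
    rw [inner_sub_right, inner_eq, inner_eq, Complex.re_ofReal_mul,
      show star (B t ξ) * (-((16 * π ^ 4 : ℝ) : ℂ) * N2 (A t) ξ) =
        ((-(16 * π ^ 4) : ℝ) : ℂ) * (star (B t ξ) * N2 (A t) ξ) by push_cast; ring, Complex.re_ofReal_mul,
      show star (B t ξ) * (((4 * π ^ 2 * ν * ‖ξ‖ ^ 2 : ℝ) : ℂ) * B t ξ) =
        ((4 * π ^ 2 * ν * ‖ξ‖ ^ 2 : ℝ) : ℂ) * (star (B t ξ) * B t ξ) by push_cast; ring, Complex.re_ofReal_mul,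
      ← inner_eq (B t ξ) (B t ξ), real_inner_self_eq_norm_sq]
    have h1 : jb ξ ^ (s + 1) = jb ξ ^ s * jb ξ := Real.rpow_add_one (jb_pos ξ).ne' s
    have h2 : jb ξ ^ (2 * s) = (jb ξ ^ s) ^ 2 := by rw [two_mul, Real.rpow_add (jb_pos ξ), sq]
    have h3 : ‖ξ‖ ^ 2 = jb ξ ^ 2 - 1 := by rw [jb_sq]; ring
    rw [h1, h2, h3]; ring
  have i1 := int_pair (e := s) (K := K + (2 ^ N * K * K * J3)) (f := B t) (g := N2 (A t)) hN
    hcB.aestronglyMeasurable hmN.aestronglyMeasurable (fun ξ => by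
      have := pow_weaken (norm_nonneg _) (Nat.le_add_right N 4) ((hK t (by simpa using hδ)).2 ξ).2
      linarith) (fun ξ => by
      have h1 := N2_dec (N := N) (fun ξ => ((hK t (by simpa using hδ)).2 ξ).1) ξ
      linarith)
  have i2 := (h.DecB ht').int_nsq (s + 1)
  have i3 := (h.DecB ht').int_nsq s
  simp only [e1]
  have i1r : Integrable (fun ξ => (((jb ξ ^ (2 * s) : ℝ) : ℂ) * (star (B t ξ) * N2 (A t) ξ)).re) := i1.re
  have i23 : Integrable (fun ξ => (jb ξ ^ (s + 1) * ‖B t ξ‖) ^ 2 - (jb ξ ^ s * ‖B t ξ‖) ^ 2) := i2.sub i3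
  rw [integral_sub (i1r.const_mul _) (i23.const_mul _), integral_const_mul, integral_const_mul,
    integral_sub i2 i3, re_int i1]
  rfl

lemma Sol.deriv_bound {s ν : ℝ} (hs : 2 < s) (hν : 0 < ν) : ∃ c1 c2 : ℝ, 0 < c1 ∧ 0 < c2 ∧
    ∀ T' A B, Sol ν T' A B → ∀ t ∈ Set.Ioo 0 T', ∃ D,
      HasDerivAt (fun τ => 4 * π ^ 2 * nsq (s + 1) (A τ) + nsq s (B τ)) D t ∧
      D ≤ c1 * (4 * π ^ 2 * nsq (s + 1) (A t) + nsq s (B t)) ^ 2 +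
        c2 * (4 * π ^ 2 * nsq (s + 1) (A t) + nsq s (B t)) := by
  obtain ⟨K, hK, hb⟩ := tri_bound hs
  have hpi := Real.pi_pos
  refine ⟨(16 * π ^ 4 * K) ^ 2 / (4 * (8 * π ^ 2 * ν)), 8 * π ^ 2 * ν, by positivity, by positivity,
    fun T' A B h t ht => ⟨_, ((h.derivA (s := s) ht).const_mul (4 * π ^ 2)).add (h.derivB hν ht), ?_⟩⟩
  have ht' : t ∈ Set.Ico 0 T' := ⟨ht.1.le, ht.2⟩
  have e := energy_identity hs (h.DecA ht') (h.DecB ht') (h.hermA t ht') (h.hermB t ht')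
  have e' := congrArg Complex.re e
  rw [Complex.add_re] at e'
  have b := hb _ _ (h.DecA ht') (h.DecB ht')
  set I := ∫ z : Plane × Plane, (sym s z.1 z.2 : ℂ) * (A t z.1 * A t z.2 * B t (-z.1 - z.2)) ∂(volume.prod volume)
  have b2 : -(K * (nsq (s + 1) (A t) * √(nsq (s + 1) (B t)))) ≤ I.re := by
    have := Complex.abs_re_le_norm I
    have := neg_abs_le I.re
    linarith
  have e3 : ((1 / 2 : ℂ) * I).re = 1 / 2 * I.re := by
    have : (1 / 2 : ℂ) = ((1 / 2 : ℝ) : ℂ) := by push_cast; rfl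
    rw [this, Complex.re_ofReal_mul]
  rw [e3] at e'
  have hF0 := nsq_nonneg (s + 1) (A t)
  have hG0 := nsq_nonneg s (B t)
  have hY0 := nsq_nonneg (s + 1) (B t)
  have hY : nsq (s + 1) (B t) = √(nsq (s + 1) (B t)) ^ 2 := (Real.sq_sqrt hY0).symm
  have hYn := Real.sqrt_nonneg (nsq (s + 1) (B t))
  set Y := √(nsq (s + 1) (B t))
  rw [hY]
  set a := nsq (s + 1) (A t)
  set g := nsq s (B t)
  set F := 4 * π ^ 2 * a + g with hF
  have haF : a ≤ F := by
    have : 1 ≤ 4 * π ^ 2 := by nlinarith [Real.pi_gt_three]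
    nlinarith
  have h1 : 4 * π ^ 2 * (-(8 * π ^ 2) *
      (∫ ξ, ((jb ξ ^ (2 * s + 2) : ℝ) : ℂ) * (star (A t ξ) * N1 (A t) (B t) ξ)).re) +
      (-(32 * π ^ 4) * (∫ ξ, ((jb ξ ^ (2 * s) : ℝ) : ℂ) * (star (B t ξ) * N2 (A t) ξ)).re
        - 8 * π ^ 2 * ν * (Y ^ 2 - g)) = -(16 * π ^ 4) * I.re - 8 * π ^ 2 * ν * (Y ^ 2 - g) := by
    linear_combination (-(32 * π ^ 4)) * e'
  rw [h1]
  have h2 : -(16 * π ^ 4) * I.re ≤ 16 * π ^ 4 * K * (F * Y) := by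
    have : 16 * π ^ 4 * (-(K * (a * Y))) ≤ 16 * π ^ 4 * I.re := by gcongr
    have : 16 * π ^ 4 * K * (a * Y) ≤ 16 * π ^ 4 * K * (F * Y) := by gcongr
    linarith
  have hc : 0 < 8 * π ^ 2 * ν := by positivity
  have hg : g ≤ F := by have : 0 ≤ 4 * π ^ 2 * a := by positivity
                        linarith
  have h3 : 8 * π ^ 2 * ν * g ≤ 8 * π ^ 2 * ν * F := by gcongr
  generalize 16 * π ^ 4 * K = k at *
  generalize 8 * π ^ 2 * ν = c at *
  have h4 : k * (F * Y) ≤ k ^ 2 / (4 * c) * F ^ 2 + c * Y ^ 2 := by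
    have : k ^ 2 / (4 * c) * F ^ 2 + c * Y ^ 2 - k * (F * Y) = (k * F - 2 * c * Y) ^ 2 / (4 * c) := by
      field_simp; ring
    have : 0 ≤ (k * F - 2 * c * Y) ^ 2 / (4 * c) := by positivity
    linarith
  linarith

lemma ode_aux {c1 c2 M : ℝ} (h1 : 0 < c1) (h2 : 0 < c2) (hM : 0 < M) : ∃ T, 0 < T ∧
    ∀ T', 0 < T' → ∀ F : ℝ → ℝ, (∀ t, 0 ≤ F t) → ContinuousWithinAt F (Set.Ico 0 T') 0 →
      (∀ t ∈ Set.Ioo 0 T', ∃ D, HasDerivAt F D t ∧ D ≤ c1 * F t ^ 2 + c2 * F t) → F 0 ≤ M →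
      ∀ t, 0 ≤ t → t < min T T' → F t ≤ 2 * F 0 := by
  set L := c1 * (2 * (M + 1)) + c2 + 1 with hL
  have hLp : 0 < L := by positivity
  have hl2 := Real.log_pos (one_lt_two)
  refine ⟨Real.log 2 / L, by positivity, fun T' hT' F hF0 hFc hFd hFM t ht0 htT => ?_⟩
  rw [lt_min_iff] at htT
  rcases ht0.eq_or_lt with rfl | htp
  · linarith [hF0 0]
  choose! D hD hDb using hFd
  -- bound with margin
  have key : ∀ e, 0 < e → e ≤ 1 → F t ≤ 2 * (F 0 + e) := by
    intro e he he1
    have hev : ∀ᶠ r in nhdsWithin 0 (Set.Ico 0 T'), F r < F 0 + e :=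
      hFc.eventually_lt_const (by linarith)
    rw [Filter.Eventually, Metric.mem_nhdsWithin_iff] at hev
    obtain ⟨d, hd, hsub⟩ := hev
    set r := min (d / 2) (t / 2) with hr
    have hrp : 0 < r := lt_min (by linarith) (by linarith)
    have hrt : r < t := lt_of_le_of_lt (min_le_right _ _) (by linarith)
    have hFr : F r < F 0 + e := by
      apply hsub
      refine ⟨?_, hrp.le, by linarith⟩
      rw [Metric.mem_ball, Real.dist_eq, sub_zero, abs_of_pos hrp]
      exact lt_of_le_of_lt (min_le_left _ _) (by linarith)
    have hin : ∀ x ∈ Set.Icc r t, x ∈ Set.Ioo 0 T' := fun x hx => ⟨by linarith [hx.1], by linarith [hx.2]⟩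
    have hexp : ∀ x ≤ t, Real.exp (L * x) ≤ 2 := fun x hx => by
      have : L * x ≤ Real.log 2 := by
        have : t * L < Real.log 2 := (lt_div_iff₀ hLp).1 htT.1
        nlinarith
      calc _ ≤ Real.exp (Real.log 2) := Real.exp_le_exp.2 this
        _ = 2 := Real.exp_log two_pos
    have hBd : ∀ x, HasDerivAt (fun x => (F 0 + e) * Real.exp (L * x)) ((F 0 + e) * (Real.exp (L * x) * L)) x := by
      intro x
      have := ((hasDerivAt_id x).const_mul L).exp.const_mul (F 0 + e)
      simpa using this
    have := image_le_of_deriv_right_lt_deriv_boundary (f := F) (f' := D) (a := r) (b := t)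
      (B := fun x => (F 0 + e) * Real.exp (L * x)) (B' := fun x => (F 0 + e) * (Real.exp (L * x) * L))
      (fun x hx => (hD x (hin x hx)).continuousAt.continuousWithinAt)
      (fun x hx => (hD x (hin x ⟨hx.1, hx.2.le⟩)).hasDerivWithinAt)
      (by
        have : 1 ≤ Real.exp (L * r) := Real.one_le_exp (by positivity)
        have := hF0 0
        nlinarith)
      hBd
      (fun x hx hxe => by
        replace hxe : F x = (F 0 + e) * Real.exp (L * x) := hxe
        have hb := hDb x (hin x ⟨hx.1, hx.2.le⟩)
        have hle : F x ≤ 2 * (M + 1) := by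
          rw [hxe]
          have := hexp x hx.2.le
          have := hF0 0
          have := Real.exp_pos (L * x)
          nlinarith
        have hFx : 0 < F x := by
          rw [hxe]; have := hF0 0; positivity
        have : (F 0 + e) * (Real.exp (L * x) * L) = F x * L := by rw [hxe]; ring
        rw [this]
        have : c1 * F x ^ 2 ≤ c1 * (2 * (M + 1)) * F x := by
          rw [sq, mul_assoc]; gcongr
        rw [hL]
        nlinarith)
      (Set.right_mem_Icc.2 hrt.le)
    refine this.trans ?_
    have h3 := hexp t le_rfl
    have h4 := hF0 0
    nlinarith
  by_contra hcon
  push Not at hcon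
  set g := F t - 2 * F 0
  have := key (min 1 (g / 4)) (lt_min one_pos (by simp only [g]; linarith)) (min_le_left _ _)
  have : min 1 (g / 4) ≤ g / 4 := min_le_right _ _
  simp only [g] at *
  linarith

lemma Sol.bound {s ν M : ℝ} (hs : 2 < s) (hν : 0 < ν) (hM : 0 < M) : ∃ T, 0 < T ∧ ∀ T', 0 < T' →
    ∀ A B, Sol ν T' A B → nsq (s + 1) (A 0) + nsq s (B 0) ≤ M → ∀ t, 0 ≤ t → t < min T T' →
      nsq (s + 1) (A t) + nsq s (B t) ≤ 8 * π ^ 2 * (nsq (s + 1) (A 0) + nsq s (B 0)) := by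
  obtain ⟨c1, c2, hc1, hc2, hD⟩ := Sol.deriv_bound hs hν
  have hpi := Real.pi_pos
  have h1 : 1 ≤ 4 * π ^ 2 := by nlinarith [Real.pi_gt_three]
  obtain ⟨T, hT, h⟩ := ode_aux hc1 hc2 (M := 4 * π ^ 2 * M) (by positivity)
  refine ⟨T, hT, fun T' hT' A B hS hM0 t ht0 htT => ?_⟩
  have z : (0:ℝ) ∈ Set.Ico 0 T' := ⟨le_rfl, hT'⟩
  have ca : ContinuousWithinAt (fun τ => nsq (s + 1) (A τ)) (Set.Ico 0 T') 0 := by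
    obtain ⟨N, hN⟩ := exists_nat_ge (2 * (s + 1) + 3)
    obtain ⟨δ, hδ, K, hK⟩ := hS.dec 0 z N
    exact nsq_cont hN hδ hS.cA (fun τ h1 h2 ξ => (hK τ h1 h2 ξ).1) hS.zA
  have cb : ContinuousWithinAt (fun τ => nsq s (B τ)) (Set.Ico 0 T') 0 := by
    obtain ⟨N, hN⟩ := exists_nat_ge (2 * s + 3)
    obtain ⟨δ, hδ, K, hK⟩ := hS.dec 0 z N
    exact nsq_cont hN hδ hS.cB (fun τ h1 h2 ξ => (hK τ h1 h2 ξ).2) hS.zB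
  have a0 := fun t => nsq_nonneg (s + 1) (A t)
  have b0 := fun t => nsq_nonneg s (B t)
  have := h T' hT' (fun τ => 4 * π ^ 2 * nsq (s + 1) (A τ) + nsq s (B τ))
    (fun t => by have := a0 t; have := b0 t; positivity)
    ((ca.const_mul _).add cb) (hD T' A B hS) (by
      have := a0 0
      have := b0 0
      nlinarith) t ht0 htT
  have := a0 0
  have := b0 0
  have := a0 t
  have := b0 t
  nlinarith

/-- local boundedness of a family of Schwartz functions along a filter -/
def LB {F : Type*} [NormedAddCommGroup F] [NormedSpace ℝ F] (l : Filter ℝ) (f : ℝ → SchwartzMap Plane F) : Prop :=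
  ∀ k n : ℕ, ∃ K : ℝ, ∀ᶠ τ in l, SchwartzMap.seminorm ℝ k n (f τ) ≤ K

lemma LB.sup {F : Type*} [NormedAddCommGroup F] [NormedSpace ℝ F] {l : Filter ℝ}
    {f : ℝ → SchwartzMap Plane F} (h : LB l f) (S : Finset (ℕ × ℕ)) :
    ∃ K : ℝ, ∀ᶠ τ in l, (S.sup (schwartzSeminormFamily ℝ Plane F)) (f τ) ≤ K := by
  classical
  induction S using Finset.induction_on with
  | empty => exact ⟨0, Filter.Eventually.of_forall fun τ => by simp⟩
  | insert m S _ ih =>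
    obtain ⟨K, hK⟩ := ih
    obtain ⟨K', hK'⟩ := h m.1 m.2
    refine ⟨max K' K, ?_⟩
    filter_upwards [hK, hK'] with τ h1 h2
    rw [Finset.sup_insert]
    exact max_le_max h2 h1

lemma LB.seminorm {F : Type*} [NormedAddCommGroup F] [NormedSpace ℝ F] {l : Filter ℝ}
    {f : ℝ → SchwartzMap Plane F} (h : LB l f) (q : Seminorm ℝ (SchwartzMap Plane F)) (hq : Continuous q) :
    ∃ K : ℝ, ∀ᶠ τ in l, q (f τ) ≤ K := by
  obtain ⟨S, C, _, hC⟩ := Seminorm.bound_of_continuous (schwartz_withSeminorms ℝ Plane F) q hq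
  obtain ⟨K, hK⟩ := h.sup S
  refine ⟨C * K, ?_⟩
  filter_upwards [hK] with τ h1
  refine (hC (f τ)).trans ?_
  rw [smul_apply, NNReal.smul_def, smul_eq_mul]
  gcongr

lemma LB.map {F G : Type*} [NormedAddCommGroup F] [NormedSpace ℝ F] [NormedAddCommGroup G] [NormedSpace ℝ G]
    {l : Filter ℝ} {f : ℝ → SchwartzMap Plane F} (h : LB l f)
    (L : SchwartzMap Plane F →L[ℝ] SchwartzMap Plane G) : LB l (fun τ => L (f τ)) := by
  intro k n
  exact h.seminorm ((schwartzSeminormFamily ℝ Plane G (k, n)).comp L.toLinearMap)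
    (((schwartz_withSeminorms ℝ Plane G).continuous_seminorm (k, n)).comp L.continuous)

lemma LB.bound {F : Type*} [NormedAddCommGroup F] [NormedSpace ℝ F] {l : Filter ℝ}
    {f : ℝ → SchwartzMap Plane F} (h : LB l f) (N : ℕ) :
    ∃ K : ℝ, ∀ᶠ τ in l, ∀ x, ‖f τ x‖ * jb x ^ N ≤ K := by
  obtain ⟨K, hK⟩ := h.sup (Finset.Iic (N, 0))
  refine ⟨2 ^ N * K, ?_⟩
  filter_upwards [hK] with τ h1 x
  have h2 := SchwartzMap.one_add_le_sup_seminorm_apply (𝕜 := ℝ) (m := (N, 0)) (k := N) (n := 0) le_rfl le_rfl (f τ) x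
  rw [norm_iteratedFDeriv_zero] at h2
  have h3 : jb x ≤ 1 + ‖x‖ := by
    apply Real.sqrt_le_iff.2
    constructor
    · positivity
    · nlinarith [norm_nonneg x]
  have hp := jb_pos x
  calc ‖f τ x‖ * jb x ^ N ≤ ‖f τ x‖ * (1 + ‖x‖) ^ N := by gcongr
    _ = (1 + ‖x‖) ^ N * ‖f τ x‖ := mul_comm _ _
    _ ≤ _ := h2
    _ ≤ _ := by gcongr; exact h1

/-- complexification -/
def cS : SchwartzMap Plane ℝ →L[ℝ] SchwartzMap Plane ℂ := SchwartzMap.postcompCLM Complex.ofRealCLM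

lemma cS_apply (f : SchwartzMap Plane ℝ) (x : Plane) : cS f x = (f x : ℂ) := rfl

/-- Fourier transform of a real function -/
def fS : SchwartzMap Plane ℝ →L[ℝ] SchwartzMap Plane ℂ :=
  ((FourierTransform.fourierCLM ℂ (SchwartzMap Plane ℂ)).restrictScalars ℝ).comp cS

lemma fS_eq (f : SchwartzMap Plane ℝ) : fS f = 𝓕 (cS f) := rfl

lemma fS_apply (f : SchwartzMap Plane ℝ) (ξ : Plane) : fS f ξ = 𝓕 (fun x => (f x : ℂ)) ξ := by
  rw [fS_eq, SchwartzMap.fourier_coe]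
  rfl

lemma fS_coe (f : SchwartzMap Plane ℝ) : ⇑(fS f) = 𝓕 (fun x => (f x : ℂ)) := funext (fS_apply f)

/-- partial derivative on Schwartz functions -/
def DS (i : Fin 2) : SchwartzMap Plane ℝ →L[ℝ] SchwartzMap Plane ℝ :=
  LineDeriv.lineDerivOpCLM ℝ (SchwartzMap Plane ℝ) (EuclideanSpace.single i (1:ℝ) : Plane)

lemma DS_apply (i : Fin 2) (f : SchwartzMap Plane ℝ) (x : Plane) : DS i f x = pd i f x := rfl

lemma DS_coe (i : Fin 2) (f : SchwartzMap Plane ℝ) : pd i f = ⇑(DS i f) := rfl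

/-- Laplacian -/
def LS : SchwartzMap Plane ℝ →L[ℝ] SchwartzMap Plane ℝ := (DS 0).comp (DS 0) + (DS 1).comp (DS 1)

lemma LS_coe (f : SchwartzMap Plane ℝ) : lap f = ⇑(LS f) := rfl

lemma fS_DS (i : Fin 2) (f : SchwartzMap Plane ℝ) (ξ : Plane) :
    fS (DS i f) ξ = 2 * π * Complex.I * (ξ i : ℂ) * fS f ξ := by
  have h : cS (DS i f) = LineDeriv.lineDerivOp (EuclideanSpace.single i (1:ℝ) : Plane) (cS f) := by
    ext x
    rw [SchwartzMap.lineDerivOp_apply_eq_fderiv, cS_apply, DS_apply, pd]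
    have h1 : HasFDerivAt (⇑(cS f)) (Complex.ofRealCLM.comp (fderiv ℝ f x)) x :=
      Complex.ofRealCLM.hasFDerivAt.comp x f.differentiableAt.hasFDerivAt
    rw [h1.fderiv]; rfl
  have hg : (fun x : Plane => inner ℝ x (EuclideanSpace.single i (1:ℝ) : Plane)).HasTemperateGrowth := by fun_prop
  rw [fS_eq, h, SchwartzMap.fourier_lineDerivOp_eq, smul_apply,
    SchwartzMap.smulLeftCLM_apply_apply hg, ← fS_eq]
  simp [EuclideanSpace.inner_single_right]
  ring

lemma fS_LS (f : SchwartzMap Plane ℝ) (ξ : Plane) :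
    fS (LS f) ξ = -((4 * π ^ 2 * ‖ξ‖ ^ 2 : ℝ) : ℂ) * fS f ξ := by
  have h : LS f = DS 0 (DS 0 f) + DS 1 (DS 1 f) := rfl
  have hn : ‖ξ‖ ^ 2 = ξ 0 ^ 2 + ξ 1 ^ 2 := by
    rw [EuclideanSpace.norm_sq_eq]; simp
  rw [h, map_add, add_apply, fS_DS, fS_DS, fS_DS, fS_DS, hn]
  push_cast
  linear_combination (4 * π ^ 2 * (ξ 0 ^ 2 + ξ 1 ^ 2) * fS f ξ : ℂ) * Complex.I_sq

lemma fourier_twice (f : SchwartzMap Plane ℂ) (x : Plane) :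
    (𝓕 (𝓕 f : SchwartzMap Plane ℂ) : SchwartzMap Plane ℂ) x = f (-x) := by
  have h : (FourierTransformInv.fourierInv (𝓕 f : SchwartzMap Plane ℂ) : SchwartzMap Plane ℂ) = f := by simp
  have h2 := DFunLike.congr_fun h (-x)
  rw [← h2, SchwartzMap.fourierInv_apply_eq]
  simp

lemma fourier_mul (f g : SchwartzMap Plane ℂ) (ξ : Plane) :
    𝓕 (fun x => f x * g x) ξ =
      ∫ η, (𝓕 f : SchwartzMap Plane ℂ) η * (𝓕 g : SchwartzMap Plane ℂ) (ξ - η) := by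
  set m : ℂ →L[ℂ] ℂ →L[ℂ] ℂ := ContinuousLinearMap.mul ℂ ℂ
  set p : SchwartzMap Plane ℂ := SchwartzMap.pairing m f g with hp
  have h : SchwartzMap.convolution m (𝓕 f) (𝓕 g) = 𝓕 p := by
    have h1 : 𝓕 (SchwartzMap.convolution m (𝓕 f) (𝓕 g)) = 𝓕 (𝓕 p : SchwartzMap Plane ℂ) := by
      ext x
      rw [SchwartzMap.fourier_convolution, SchwartzMap.pairing_apply_apply, fourier_twice, fourier_twice,
        fourier_twice, hp, SchwartzMap.pairing_apply_apply]
    have h2 := congrArg (fun u : SchwartzMap Plane ℂ => (FourierTransformInv.fourierInv u : SchwartzMap Plane ℂ)) h1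
    simpa using h2
  have h3 : 𝓕 (fun x => f x * g x) ξ = (𝓕 p : SchwartzMap Plane ℂ) ξ := by
    rw [SchwartzMap.fourier_coe]; rfl
  rw [h3, ← h, SchwartzMap.convolution_apply]
  rfl

lemma fS_herm (f : SchwartzMap Plane ℝ) (ξ : Plane) : fS f (-ξ) = star (fS f ξ) := by
  rw [fS_apply, fS_apply, Real.fourier_eq', Real.fourier_eq']
  have := integral_conj (𝕜 := ℂ) (f := fun v : Plane => Complex.exp (↑(-2 * π * inner ℝ v ξ) * Complex.I) • (f v : ℂ)) (μ := volume)
  refine Eq.trans ?_ this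
  congr 1; ext v
  rw [smul_eq_mul, smul_eq_mul, map_mul, Complex.conj_ofReal, ← Complex.exp_conj, map_mul, Complex.conj_ofReal,
    Complex.conj_I, inner_neg_right]
  push_cast
  ring_nf

/-- product of real Schwartz functions -/
def pm (f g : SchwartzMap Plane ℝ) : SchwartzMap Plane ℝ :=
  SchwartzMap.pairing (ContinuousLinearMap.mul ℝ ℝ) f g

lemma pm_apply (f g : SchwartzMap Plane ℝ) (x : Plane) : pm f g x = f x * g x := by
  rw [pm, SchwartzMap.pairing_apply_apply]; rfl

lemma fS_pm (f g : SchwartzMap Plane ℝ) (ξ : Plane) : fS (pm f g) ξ = ∫ η, fS f η * fS g (ξ - η) := by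
  rw [fS_eq f, fS_eq g, ← fourier_mul, fS_apply]
  have : (fun x => (pm f g x : ℂ)) = fun x => cS f x * cS g x := by
    ext x
    rw [pm_apply, cS_apply, cS_apply]; push_cast; rfl
  rw [this]

lemma fS_dec (f : SchwartzMap Plane ℝ) : Dec (fS f) := ⟨(fS f).continuous, fun N => by
  have : LB (pure 0) (fun _ => fS f) := fun k n => ⟨_, Filter.Eventually.of_forall fun _ => le_rfl⟩
  obtain ⟨K, hK⟩ := this.bound N
  exact ⟨K, hK⟩⟩

lemma fS_pm_int (f g : SchwartzMap Plane ℝ) (ξ : Plane) : Integrable (fun η => fS f η * fS g (ξ - η)) := by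
  obtain ⟨K, hK0, hK⟩ := (fS_dec g).rdec 0
  have cf := (fS_dec f).cont
  have cg := (fS_dec g).cont
  refine ((fS_dec f).integrable.norm.const_mul K).mono' (Continuous.aestronglyMeasurable (by fun_prop))
    (Filter.Eventually.of_forall fun η => ?_)
  have := hK (ξ - η)
  rw [Real.rpow_zero, one_mul] at this
  rw [norm_mul, mul_comm]; gcongr

/-- right-hand side of the first equation -/
def Ra (a b : SchwartzMap Plane ℝ) : SchwartzMap Plane ℝ := pm (DS 0 a) (DS 1 b) - pm (DS 1 a) (DS 0 b)

lemma fS_Ra (a b : SchwartzMap Plane ℝ) (ξ : Plane) :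
    fS (Ra a b) ξ = -((4 * π ^ 2 : ℝ) : ℂ) * N1 (fS a) (fS b) ξ := by
  rw [Ra, map_sub, sub_apply, fS_pm, fS_pm, ← integral_sub (fS_pm_int _ _ _) (fS_pm_int _ _ _), N1,
    ← integral_const_mul]
  congr 1; ext η
  rw [fS_DS, fS_DS, fS_DS, fS_DS, ← cr_sub, cr]
  push_cast
  linear_combination (4 * π ^ 2 * (η 0 * (ξ - η).ofLp 1 - η 1 * (ξ - η).ofLp 0) * (fS a η * fS b (ξ - η)) : ℂ)
    * Complex.I_sq

/-- right-hand side of the second equation -/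
def Rb (ν : ℝ) (a b : SchwartzMap Plane ℝ) : SchwartzMap Plane ℝ := ν • LS b - Ra a (LS a)

lemma fS_Rb (ν : ℝ) (a b : SchwartzMap Plane ℝ) (ξ : Plane) :
    fS (Rb ν a b) ξ = -((16 * π ^ 4 : ℝ) : ℂ) * N2 (fS a) ξ - ((4 * π ^ 2 * ν * ‖ξ‖ ^ 2 : ℝ) : ℂ) * fS b ξ := by
  have h : N1 (fS a) (fS (LS a)) ξ = -((4 * π ^ 2 : ℝ) : ℂ) * N2 (fS a) ξ := by
    rw [N1, N2, ← integral_const_mul]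
    congr 1; ext η
    rw [fS_LS]; push_cast; ring
  rw [Rb, map_sub, map_smul, sub_apply, smul_apply, fS_Ra, h, fS_LS, Complex.real_smul]
  push_cast
  ring

lemma int_char {g : Plane → ℝ} (ξ : Plane) (hg : Continuous g) :
    AEStronglyMeasurable (fun x : Plane => Complex.exp (↑(-2 * π * inner ℝ x ξ) * Complex.I) • (g x : ℂ)) :=
  Continuous.aestronglyMeasurable (by fun_prop)

lemma norm_char (r : ℝ) (z : ℂ) : ‖Complex.exp ((r : ℂ) * Complex.I) • z‖ = ‖z‖ := by
  rw [norm_smul, Complex.norm_exp_ofReal_mul_I, one_mul]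

lemma bound3 {y K : ℝ} {x : Plane} (h : y * jb x ^ 3 ≤ K) : y ≤ K * jb x ^ (-3:ℝ) := by
  have := jb_pos x
  rw [Real.rpow_neg this.le, ← div_eq_mul_inv, le_div_iff₀ (by positivity)]
  exact_mod_cast h

lemma fS_hasDerivAt {f g : ℝ → SchwartzMap Plane ℝ} {t K : ℝ} (ξ : Plane)
    (hd : ∀ᶠ τ in nhds t, ∀ x, HasDerivAt (fun r => f r x) (g τ x) τ)
    (hK : ∀ᶠ τ in nhds t, ∀ x, ‖g τ x‖ * jb x ^ 3 ≤ K) :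
    HasDerivAt (fun r => fS (f r) ξ) (fS (g t) ξ) t := by
  simp only [fS_apply, Real.fourier_eq']
  refine (hasDerivAt_integral_of_dominated_loc_of_deriv_le (hd.and hK)
    (bound := fun x => K * jb x ^ (-3:ℝ))
    (F := fun τ (x : Plane) => Complex.exp (↑(-2 * π * inner ℝ x ξ) * Complex.I) • (f τ x : ℂ))
    (F' := fun τ (x : Plane) => Complex.exp (↑(-2 * π * inner ℝ x ξ) * Complex.I) • (g τ x : ℂ)) ?_ ?_ ?_ ?_ ?_ ?_).2
  · exact Filter.Eventually.of_forall fun τ => int_char ξ (f τ).continuous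
  · refine (f t).integrable.norm.mono' (int_char ξ (f t).continuous) (Filter.Eventually.of_forall fun x => ?_)
    rw [norm_char, Complex.norm_real]
  · exact int_char ξ (g t).continuous
  · refine Filter.Eventually.of_forall fun x τ hτ => ?_
    rw [norm_char, Complex.norm_real]
    exact bound3 (hτ.2 x)
  · exact (integrable_jb (by norm_num)).const_mul K
  · refine Filter.Eventually.of_forall fun x τ hτ => ?_
    exact (hτ.1 x).ofReal_comp.const_smul (Complex.exp (↑(-2 * π * inner ℝ x ξ) * Complex.I))

lemma fS_cont {f : ℝ → SchwartzMap Plane ℝ} {t K : ℝ} {S : Set ℝ} (ξ : Plane)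
    (hd : ∀ x, ContinuousWithinAt (fun r => f r x) S t)
    (hK : ∀ᶠ τ in nhdsWithin t S, ∀ x, ‖f τ x‖ * jb x ^ 3 ≤ K) :
    ContinuousWithinAt (fun r => fS (f r) ξ) S t := by
  simp only [fS_apply, Real.fourier_eq']
  refine continuousWithinAt_of_dominated (bound := fun x => K * jb x ^ (-3:ℝ)) ?_ ?_ ?_ ?_
  · exact Filter.Eventually.of_forall fun τ => int_char ξ (f τ).continuous
  · filter_upwards [hK] with τ hτ
    refine Filter.Eventually.of_forall fun x => ?_
    rw [norm_char, Complex.norm_real]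
    exact bound3 (hτ x)
  · exact (integrable_jb (by norm_num)).const_mul K
  · refine Filter.Eventually.of_forall fun x => ?_
    exact (Complex.continuous_ofReal.continuousAt.comp_continuousWithinAt (hd x)).const_smul (Complex.exp (↑(-2 * π * inner ℝ x ξ) * Complex.I))

/-- pointwise decay, locally uniform -/
def PB (l : Filter ℝ) (f : ℝ → SchwartzMap Plane ℝ) : Prop := ∃ K, ∀ᶠ τ in l, ∀ x, ‖f τ x‖ * jb x ^ 3 ≤ K

lemma PB.sub {l : Filter ℝ} {f g : ℝ → SchwartzMap Plane ℝ} (hf : PB l f) (hg : PB l g) :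
    PB l (fun τ => f τ - g τ) := by
  obtain ⟨K, hK⟩ := hf
  obtain ⟨K', hK'⟩ := hg
  refine ⟨K + K', ?_⟩
  filter_upwards [hK, hK'] with τ h1 h2 x
  have hp := jb_pos x
  calc _ ≤ (‖f τ x‖ + ‖g τ x‖) * jb x ^ 3 := by gcongr; exact norm_sub_le _ _
    _ ≤ _ := by linarith [h1 x, h2 x]

lemma PB.smul {l : Filter ℝ} {f : ℝ → SchwartzMap Plane ℝ} (hf : PB l f) (c : ℝ) :
    PB l (fun τ => c • f τ) := by
  obtain ⟨K, hK⟩ := hf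
  refine ⟨‖c‖ * K, ?_⟩
  filter_upwards [hK] with τ h1 x
  rw [smul_apply, norm_smul, mul_assoc]
  have := h1 x
  gcongr

lemma PB.pm {l : Filter ℝ} {f g : ℝ → SchwartzMap Plane ℝ} (hf : PB l f) (hg : PB l g) :
    PB l (fun τ => pm (f τ) (g τ)) := by
  obtain ⟨K, hK⟩ := hf
  obtain ⟨K', hK'⟩ := hg
  refine ⟨K * K', ?_⟩
  filter_upwards [hK, hK'] with τ h1 h2 x
  have hp := one_le_jb x
  have h3 : ‖f τ x‖ ≤ K := le_trans (le_mul_of_one_le_right (norm_nonneg _) (one_le_pow₀ hp)) (h1 x)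
  have h4 : 0 ≤ K := (norm_nonneg _).trans h3
  have h5 := h2 x
  rw [pm_apply, norm_mul, mul_assoc]
  gcongr

lemma LB.pb {l : Filter ℝ} {f : ℝ → SchwartzMap Plane ℝ} (h : LB l f) : PB l f := h.bound 3

lemma PB_Ra {l : Filter ℝ} {f g : ℝ → SchwartzMap Plane ℝ} (hf : LB l f) (hg : LB l g) :
    PB l (fun τ => Ra (f τ) (g τ)) :=
  ((hf.map (DS 0)).pb.pm (hg.map (DS 1)).pb).sub ((hf.map (DS 1)).pb.pm (hg.map (DS 0)).pb)

lemma PB_Rb {l : Filter ℝ} {f g : ℝ → SchwartzMap Plane ℝ} (ν : ℝ) (hf : LB l f) (hg : LB l g) :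
    PB l (fun τ => Rb ν (f τ) (g τ)) :=
  ((hg.map LS).pb.smul ν).sub (PB_Ra hf (hf.map LS))

lemma deriv_of_smooth {T' : ℝ} {a : ℝ → SchwartzMap Plane ℝ}
    (h : ContDiffOn ℝ (⊤ : ℕ∞) (fun q : ℝ × Plane => a q.1 q.2) (Set.Ico 0 T' ×ˢ Set.univ))
    {t : ℝ} (ht : t ∈ Set.Ioo 0 T') (x : Plane) :
    HasDerivAt (fun τ => a τ x) (derivWithin (fun τ => a τ x) (Set.Ico 0 T') t) t := by
  have hn : Set.Ico 0 T' ∈ nhds t := Filter.mem_of_superset (isOpen_Ioo.mem_nhds ht) Set.Ioo_subset_Ico_self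
  have h1 : ContDiffAt ℝ (⊤ : ℕ∞) (fun q : ℝ × Plane => a q.1 q.2) (t, x) :=
    h.contDiffAt (prod_mem_nhds hn Filter.univ_mem)
  have h2 : DifferentiableAt ℝ (fun q : ℝ × Plane => a q.1 q.2) (t, x) := h1.differentiableAt (by simp)
  have h3 : DifferentiableAt ℝ (fun τ => a τ x) t :=
    h2.comp t (f := fun τ : ℝ => (τ, x)) (differentiableAt_id.prodMk (differentiableAt_const x))
  rw [derivWithin_of_mem_nhds hn]
  exact h3.hasDerivAt

lemma cont_of_smooth {T' : ℝ} (hT' : 0 < T') {a : ℝ → SchwartzMap Plane ℝ}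
    (h : ContDiffOn ℝ (⊤ : ℕ∞) (fun q : ℝ × Plane => a q.1 q.2) (Set.Ico 0 T' ×ˢ Set.univ)) (x : Plane) :
    ContinuousWithinAt (fun τ => a τ x) (Set.Ico 0 T') 0 := by
  have h1 := h.continuousOn (0, x) ⟨⟨le_rfl, hT'⟩, Set.mem_univ _⟩
  exact h1.comp (f := fun τ : ℝ => (τ, x)) (Continuous.continuousWithinAt (by fun_prop))
    (fun τ hτ => ⟨hτ, Set.mem_univ _⟩)

lemma ev_iff {T' t : ℝ} {P : ℝ → Prop} (h : ∀ᶠ τ in nhdsWithin t (Set.Ico 0 T'), P τ) :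
    ∃ δ > 0, ∀ τ ∈ Set.Ico 0 T', |τ - t| < δ → P τ := by
  rw [Filter.Eventually, Metric.mem_nhdsWithin_iff] at h
  obtain ⟨δ, hδ, hs⟩ := h
  exact ⟨δ, hδ, fun τ h1 h2 => hs ⟨by rwa [Metric.mem_ball, Real.dist_eq], h1⟩⟩

lemma sol_of {ν T' : ℝ} (hT' : 0 < T') {a b : ℝ → SchwartzMap Plane ℝ}
    (ha : ContDiffOn ℝ (⊤ : ℕ∞) (fun q : ℝ × Plane => a q.1 q.2) (Set.Ico 0 T' ×ˢ Set.univ))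
    (hb : ContDiffOn ℝ (⊤ : ℕ∞) (fun q : ℝ × Plane => b q.1 q.2) (Set.Ico 0 T' ×ˢ Set.univ))
    (hB : ∀ t ∈ Set.Ico 0 T', ∀ k n : ℕ, ∃ δ > 0, ∃ K : ℝ,
        ∀ τ ∈ Set.Ico 0 T', |τ - t| < δ →
          SchwartzMap.seminorm ℝ k n (a τ) ≤ K ∧ SchwartzMap.seminorm ℝ k n (b τ) ≤ K)
    (h1 : ∀ t ∈ Set.Ico 0 T', ∀ x : Plane,
        derivWithin (fun τ => a τ x) (Set.Ico 0 T') t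
          + pd 1 (a t) x * pd 0 (b t) x - pd 0 (a t) x * pd 1 (b t) x = 0)
    (h2 : ∀ t ∈ Set.Ico 0 T', ∀ x : Plane,
        derivWithin (fun τ => b τ x) (Set.Ico 0 T') t
          - pd 1 (a t) x * pd 0 (lap (a t)) x + pd 0 (a t) x * pd 1 (lap (a t)) x
            = ν * lap (b t) x) :
    Sol ν T' (fun t => fS (a t)) (fun t => fS (b t)) := by
  have lb : ∀ t ∈ Set.Ico 0 T', LB (nhdsWithin t (Set.Ico 0 T')) a ∧ LB (nhdsWithin t (Set.Ico 0 T')) b := by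
    intro t ht
    have : ∀ k n, ∃ K : ℝ, ∀ᶠ τ in nhdsWithin t (Set.Ico 0 T'),
        SchwartzMap.seminorm ℝ k n (a τ) ≤ K ∧ SchwartzMap.seminorm ℝ k n (b τ) ≤ K := by
      intro k n
      obtain ⟨δ, hδ, K, hK⟩ := hB t ht k n
      refine ⟨K, ?_⟩
      filter_upwards [self_mem_nhdsWithin, mem_nhdsWithin_of_mem_nhds (Metric.ball_mem_nhds t hδ)] with τ h1 h2
      exact hK τ h1 (by rwa [Metric.mem_ball, Real.dist_eq] at h2)
    exact ⟨fun k n => (this k n).imp fun K h => h.mono fun _ h => h.1,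
      fun k n => (this k n).imp fun K h => h.mono fun _ h => h.2⟩
  have hn : ∀ t ∈ Set.Ioo 0 T', nhdsWithin t (Set.Ico 0 T') = nhds t := fun t ht =>
    nhdsWithin_eq_nhds.2 (Filter.mem_of_superset (isOpen_Ioo.mem_nhds ht) Set.Ioo_subset_Ico_self)
  refine ⟨fun t _ => (fS (a t)).continuous, fun t _ => (fS (b t)).continuous, ?_,
    fun t _ => fS_herm (a t), fun t _ => fS_herm (b t), ?_, ?_, ?_, ?_⟩
  · intro t ht N
    obtain ⟨K, hK⟩ := ((lb t ht).1.map fS).bound N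
    obtain ⟨K', hK'⟩ := ((lb t ht).2.map fS).bound N
    obtain ⟨δ, hδ, h⟩ := ev_iff (hK.and hK')
    exact ⟨δ, hδ, max K K', fun τ h1 h2 ξ => ⟨((h τ h1 h2).1 ξ).trans (le_max_left _ _),
      ((h τ h1 h2).2 ξ).trans (le_max_right _ _)⟩⟩
  · intro ξ
    obtain ⟨K, hK⟩ := (lb 0 ⟨le_rfl, hT'⟩).1.pb
    exact fS_cont ξ (cont_of_smooth hT' ha) hK
  · intro ξ
    obtain ⟨K, hK⟩ := (lb 0 ⟨le_rfl, hT'⟩).2.pb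
    exact fS_cont ξ (cont_of_smooth hT' hb) hK
  · intro t ht ξ
    have l := lb t ⟨ht.1.le, ht.2⟩
    rw [hn t ht] at l
    obtain ⟨K, hK⟩ := PB_Ra l.1 l.2
    rw [← fS_Ra]
    refine fS_hasDerivAt (g := fun τ => Ra (a τ) (b τ)) ξ ?_ hK
    filter_upwards [isOpen_Ioo.mem_nhds ht] with τ hτ x
    have d := deriv_of_smooth ha hτ x
    have e := h1 τ ⟨hτ.1.le, hτ.2⟩ x
    convert d using 1
    rw [Ra, sub_apply, pm_apply, pm_apply]
    simp only [DS_apply]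
    linarith
  · intro t ht ξ
    have l := lb t ⟨ht.1.le, ht.2⟩
    rw [hn t ht] at l
    obtain ⟨K, hK⟩ := PB_Rb ν l.1 l.2
    rw [← fS_Rb]
    refine fS_hasDerivAt (g := fun τ => Rb ν (a τ) (b τ)) ξ ?_ hK
    filter_upwards [isOpen_Ioo.mem_nhds ht] with τ hτ x
    have d := deriv_of_smooth hb hτ x
    have e := h2 τ ⟨hτ.1.le, hτ.2⟩ x
    convert d using 1
    rw [Rb, Ra, sub_apply, sub_apply, smul_apply, smul_eq_mul, pm_apply, pm_apply]
    simp only [DS_apply, ← LS_coe]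
    linarith

lemma sob_eq (s : ℝ) (f : SchwartzMap Plane ℝ) : sobNorm s (⇑f) ^ 2 = nsq s (fS f) := by
  have h : ∫ ξ : Plane, (1 + ‖ξ‖ ^ 2) ^ s * ‖𝓕 (fun x => (f x : ℂ)) ξ‖ ^ 2 = nsq s (fS f) := by
    unfold nsq
    congr 1; ext ξ
    rw [nsq_integrand, jb_rpow, fS_apply, ← sq]
  rw [sobNorm, h, ← Real.sqrt_eq_rpow, Real.sq_sqrt (nsq_nonneg _ _)]

/-- Uniform Sobolev bound on a short time interval for the 2½D electron MHD system with
vertical resistivity `ν > 0` (and `μ = 0`): for `s > 2`, `ν > 0`, `M > 0` there exist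
`T > 0` and `C ≥ 1` (depending only on `s, ν, M`) such that any smooth solution on
`[0,T')` that is Schwartz in space (with Schwartz seminorms locally bounded in time)
with `‖a(0)‖_{H^{s+1}}² + ‖b(0)‖_{H^s}² ≤ M` satisfies
`‖a(t)‖_{H^{s+1}}² + ‖b(t)‖_{H^s}² ≤ C(‖a(0)‖_{H^{s+1}}² + ‖b(0)‖_{H^s}²)` on
`[0, min(T,T'))`. -/
theorem emhd_uniform_sobolev_bound_vertical
    (s ν M : ℝ) (hs : 2 < s) (hν : 0 < ν) (hM : 0 < M) :
    ∃ T : ℝ, 0 < T ∧ ∃ C : ℝ, 1 ≤ C ∧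
      ∀ T' : ℝ, 0 < T' →
      ∀ a b : ℝ → SchwartzMap Plane ℝ,
      ContDiffOn ℝ (⊤ : ℕ∞) (fun q : ℝ × Plane => a q.1 q.2) (Set.Ico 0 T' ×ˢ Set.univ) →
      ContDiffOn ℝ (⊤ : ℕ∞) (fun q : ℝ × Plane => b q.1 q.2) (Set.Ico 0 T' ×ˢ Set.univ) →
      (∀ t ∈ Set.Ico 0 T', ∀ k n : ℕ, ∃ δ > 0, ∃ K : ℝ,
        ∀ τ ∈ Set.Ico 0 T', |τ - t| < δ →
          SchwartzMap.seminorm ℝ k n (a τ) ≤ K ∧ SchwartzMap.seminorm ℝ k n (b τ) ≤ K) →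
      (∀ t ∈ Set.Ico 0 T', ∀ x : Plane,
        derivWithin (fun τ => a τ x) (Set.Ico 0 T') t
          + pd 1 (a t) x * pd 0 (b t) x - pd 0 (a t) x * pd 1 (b t) x = 0) →
      (∀ t ∈ Set.Ico 0 T', ∀ x : Plane,
        derivWithin (fun τ => b τ x) (Set.Ico 0 T') t
          - pd 1 (a t) x * pd 0 (lap (a t)) x + pd 0 (a t) x * pd 1 (lap (a t)) x
            = ν * lap (b t) x) →
      sobNorm (s+1) (⇑(a 0)) ^ 2 + sobNorm s (⇑(b 0)) ^ 2 ≤ M →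
      ∀ t : ℝ, 0 ≤ t → t < min T T' →
        sobNorm (s+1) (⇑(a t)) ^ 2 + sobNorm s (⇑(b t)) ^ 2
          ≤ C * (sobNorm (s+1) (⇑(a 0)) ^ 2 + sobNorm s (⇑(b 0)) ^ 2) := by
  obtain ⟨T, hT, h⟩ := Sol.bound hs hν hM
  refine ⟨T, hT, 8 * π ^ 2, by nlinarith [Real.pi_gt_three], fun T' hT' a b ha hb hB h1 h2 hM0 t ht0 htT => ?_⟩
  simp only [sob_eq] at hM0 ⊢
  exact h T' hT' _ _ (sol_of hT' ha hb hB h1 h2) hM0 t ht0 htT
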